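/- arXiv:1907.00885 — 2 statements merged into one kernel-verified Lean document; each statement's English description precedes it below -/
import Mathlib

section
/- Let k ≥ 3 be an integer and let 𝒜 = {A_1, …, A_n} be a finite family of subsets of ℝ² satisfying: (i) f_{k+1}(𝒜) = 0, and (ii) for every σ ⊆ {1, …, n} with |σ| ∈ {k, k+1}, the set A_σ is empty, or a single point, or both open and path-connected. Then f_k(𝒜) ≤ (1/(k−2)) · f^{ind}_{k-1}(𝒜). -/
/-- `fNum A k` is `f_k(𝒜)`: the number of subsets `σ` of the index set with
`|σ| = k+1` such that `⋂ i ∈ σ, A i` is nonempty. -/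
noncomputable def fNum {α : Type*} {n : ℕ} (A : Fin n → Set α) (k : ℕ) : ℕ :=
  Nat.card {σ : Finset (Fin n) // σ.card = k + 1 ∧ (⋂ i ∈ σ, A i).Nonempty}

/-- `fInd A k` is `f_k^{ind}(𝒜)`: the number of subsets `τ` with `|τ| = k+1` and
`⋂ i ∈ τ, A i ≠ ∅` for which there is `σ ⊃ τ` with `|σ| = k+2` and `⋂ i ∈ σ, A i ≠ ∅`. -/
noncomputable def fInd {α : Type*} {n : ℕ} (A : Fin n → Set α) (k : ℕ) : ℕ :=
  Nat.card {τ : Finset (Fin n) // τ.card = k + 1 ∧ (⋂ i ∈ τ, A i).Nonempty ∧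
    ∃ σ : Finset (Fin n), τ ⊂ σ ∧ σ.card = k + 2 ∧ (⋂ i ∈ σ, A i).Nonempty}

/-! Let `𝒮` be the family of `(k+1)`-sets `σ` with `A_σ ≠ ∅`. As no `k + 2` members of the family
have a common point, the sets `A_σ`, `σ ∈ 𝒮`, are pairwise disjoint. For a `k`-set `τ` write `d(τ)`
for the number of `σ ∈ 𝒮` containing it. If `d(τ) ≥ 2`, then `A_τ` is not a point, so it is open and
connected; it contains `d(τ)` of the sets `A_σ`, is disjoint from the others, and meets another
`A_τ'` at most in one of them. Joining the `A_σ ⊆ A_τ` by a tree inside `A_τ` for each such `τ`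
gives edge-disjoint trees whose union is a planar simple graph on `𝒮`, so the sum of `d(τ) - 1` over
all `τ` with `d(τ) ≥ 2` is at most `3 |𝒮|`. Counting pairs `τ ⊂ σ` in two ways turns this into
`(k + 1) |𝒮| ≤ 3 |𝒮| + |∂𝒮|`, and `|∂𝒮|` is the number of `τ` counted by `f^{ind}_{k-1}`.

The planar graphs are minors of square grids, found by covering compact sets with small pixels.
Their planarity is used only through duality mod 2: the square grid has an algebraic dual, algebraic
duals pass to minors, and a simple graph having one satisfies `E ≤ 3 V`. -/

/-- The sum of the values of `f` at the two ends of an edge. -/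
def endSum {V M : Type*} [AddCommMonoid M] (f : V → M) : Sym2 V → M :=
  Sym2.lift ⟨fun u v => f u + f v, fun _ _ => add_comm _ _⟩

section EndSum

variable {V W M N : Type*} [AddCommMonoid M] [AddCommMonoid N]

@[simp]
lemma endSum_mk (f : V → M) (u v : V) : endSum f s(u, v) = f u + f v := rfl

lemma endSum_map (f : W → M) (g : V → W) (e : Sym2 V) :
    endSum f (e.map g) = endSum (fun v => f (g v)) e := by
  induction e with | _ u v => rfl

lemma map_endSum (h : M →+ N) (f : V → M) (e : Sym2 V) :
    h (endSum f e) = endSum (fun v => h (f v)) e := by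
  induction e with | _ u v => exact map_add h _ _

lemma endSum_eq_zero_of_isDiag {G : Type*} [AddCommGroup G] [Module (ZMod 2) G] {f : V → G}
    {e : Sym2 V} (he : e.IsDiag) : endSum f e = 0 := by
  induction e with
  | _ u v =>
    obtain rfl : u = v := he
    exact ZModModule.add_self _

lemma endSum_single_apply_of_notMem {e : Sym2 V} {v : V} (hv : v ∉ e) :
    endSum (fun u => Finsupp.single u (1 : ZMod 2)) e v = 0 := by
  induction e with
  | _ a b =>
    rw [Sym2.mem_iff, not_or] at hv
    rw [endSum_mk, Finsupp.add_apply, Finsupp.single_eq_of_ne hv.1, Finsupp.single_eq_of_ne hv.2,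
      add_zero]

lemma endSum_single_apply_of_mem {e : Sym2 V} {v : V} (he : ¬ e.IsDiag) (hv : v ∈ e) :
    endSum (fun u => Finsupp.single u (1 : ZMod 2)) e v = 1 := by
  obtain ⟨w, rfl⟩ := hv
  have hvw : v ≠ w := he
  rw [endSum_mk, Finsupp.add_apply, Finsupp.single_eq_same, Finsupp.single_eq_of_ne hvw, add_zero]

end EndSum

/-- The boundary map of a multigraph over `ZMod 2`; an edge `e` has the ends `ends e`, a loop has
boundary zero, and the kernel is the cycle space. -/
noncomputable def chainBoundary {E V : Type*} (ends : E → Sym2 V) :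
    (E →₀ ZMod 2) →ₗ[ZMod 2] (V →₀ ZMod 2) :=
  Finsupp.linearCombination (ZMod 2) fun e => endSum (fun v => Finsupp.single v 1) (ends e)

/-- Whitney's combinatorial duality, which here stands in for planarity: the edges of a multigraph
can be given two sides each, in such a way that the cycles are the functions jumping across each
edge by the difference of a function of the sides. -/
def HasAlgebraicDual {E V : Type*} (ends : E → Sym2 V) : Prop :=
  ∃ (F : Type) (sides : E → Sym2 F), ∀ c : E →₀ ZMod 2,
    chainBoundary ends c = 0 ↔ ∃ q : F → ZMod 2, ∀ e, c e = endSum q (sides e)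

section Boundary

variable {E E' V W : Type*}

lemma chainBoundary_single (ends : E → Sym2 V) (e : E) (a : ZMod 2) :
    chainBoundary ends (Finsupp.single e a) =
      a • endSum (fun v => Finsupp.single v 1) (ends e) :=
  Finsupp.linearCombination_single _ _ _

lemma chainBoundary_map (ends : E → Sym2 V) (π : V → W) (c : E →₀ ZMod 2) :
    chainBoundary (fun e => (ends e).map π) c = Finsupp.mapDomain π (chainBoundary ends c) := by
  induction c using Finsupp.induction_linear with
  | zero => simp
  | add c d hc hd => rw [map_add, map_add, hc, hd, Finsupp.mapDomain_add]
  | single e a =>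
    have key := map_endSum (Finsupp.mapDomain.addMonoidHom (M := ZMod 2) π)
      (fun v => Finsupp.single v 1) (ends e)
    simp only [Finsupp.mapDomain.addMonoidHom_apply, Finsupp.mapDomain_single] at key
    rw [chainBoundary_single, chainBoundary_single, Finsupp.mapDomain_smul, endSum_map, key]

lemma chainBoundary_embDomain (ends : E → Sym2 V) {g : E' → E} (hg : Function.Injective g)
    (c : E' →₀ ZMod 2) :
    chainBoundary ends (c.embDomain ⟨g, hg⟩) = chainBoundary (fun e => ends (g e)) c :=
  Finsupp.linearCombination_embDomain _ _ _

/-- Deleting edges merges the two sides of every deleted edge. -/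
theorem HasAlgebraicDual.comp_injective {ends : E → Sym2 V} (h : HasAlgebraicDual ends)
    {g : E' → E} (hg : Function.Injective g) : HasAlgebraicDual fun e => ends (g e) := by
  obtain ⟨F, sides, hsides⟩ := h
  let r : F → F → Prop := fun x y => ∃ e, e ∉ Set.range g ∧ sides e = s(x, y)
  refine ⟨Quot r, fun e => (sides (g e)).map (Quot.mk r), fun c => ?_⟩
  have hemb (e : E') : c.embDomain ⟨g, hg⟩ (g e) = c e := Finsupp.embDomain_apply_self ⟨g, hg⟩ c e
  have hzero {e : E} (he : e ∉ Set.range g) : c.embDomain ⟨g, hg⟩ e = 0 :=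
    Finsupp.embDomain_of_notMem_range ⟨g, hg⟩ c e he
  rw [← chainBoundary_embDomain ends hg, hsides]
  constructor
  · rintro ⟨q, hq⟩
    have hqr (x y : F) : r x y → q x = q y := by
      rintro ⟨e, he, hxy⟩
      rw [← CharTwo.add_eq_zero, ← endSum_mk, ← hxy, ← hq, hzero he]
    exact ⟨Quot.lift q hqr, fun e => by rw [endSum_map, ← hemb, hq]⟩
  · rintro ⟨q, hq⟩
    refine ⟨fun x => q (Quot.mk r x), fun e => ?_⟩
    by_cases he : e ∈ Set.range g
    · obtain ⟨e, rfl⟩ := he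
      rw [hemb, hq, endSum_map]
    · rw [hzero he]
      induction hxy : sides e with
      | _ x y => rw [endSum_mk, Quot.sound ⟨e, he, hxy⟩, CharTwo.add_self_eq_zero]

theorem HasAlgebraicDual.of_map_injective {ends : E → Sym2 V} {f : V → W}
    (hf : Function.Injective f) (h : HasAlgebraicDual fun e => (ends e).map f) :
    HasAlgebraicDual ends := by
  obtain ⟨F, sides, hsides⟩ := h
  refine ⟨F, sides, fun c => ?_⟩
  rw [← hsides, chainBoundary_map, ← Finsupp.mapDomain_zero (f := f),
    (Finsupp.mapDomain_injective hf).eq_iff]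

lemma chainBoundary_subtypeDomain (ends : E → Sym2 V) (c : E →₀ ZMod 2) :
    chainBoundary (fun e : {e // ¬ (ends e).IsDiag} => ends e)
      (c.subtypeDomain fun e => ¬ (ends e).IsDiag) = chainBoundary ends c := by
  induction c using Finsupp.induction_linear with
  | zero => simp
  | add c d hc hd => rw [Finsupp.subtypeDomain_add, map_add, map_add, hc, hd]
  | single e a =>
    by_cases he : (ends e).IsDiag
    · have hzero : (Finsupp.single e a).subtypeDomain (fun e => ¬ (ends e).IsDiag) = 0 :=
        Finsupp.subtypeDomain_eq_zero_iff'.2 fun e' he' =>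
          Finsupp.single_eq_of_ne fun h => he' (h ▸ he)
      rw [hzero, map_zero, chainBoundary_single, endSum_eq_zero_of_isDiag he, smul_zero]
    · have hsingle : (Finsupp.single e a).subtypeDomain (fun e => ¬ (ends e).IsDiag) =
          Finsupp.single ⟨e, he⟩ a := by
        classical
        ext e'
        simp only [Finsupp.subtypeDomain_apply, Finsupp.single_apply, Subtype.ext_iff]
      rw [hsingle, chainBoundary_single, chainBoundary_single]

lemma mem_map_chainBoundary_of_mapDomain_eq_zero {ends : E → Sym2 V} {π : V → W} {D : Set E}
    (hπ : ∀ u v, π u = π v → Finsupp.single u 1 + Finsupp.single v 1 ∈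
      (Finsupp.supported (ZMod 2) (ZMod 2) D).map (chainBoundary ends))
    {x : V →₀ ZMod 2} (hx : x.mapDomain π = 0) :
    x ∈ (Finsupp.supported (ZMod 2) (ZMod 2) D).map (chainBoundary ends) := by
  rcases isEmpty_or_nonempty V with _ | _
  · rw [Subsingleton.elim x 0]
    exact zero_mem _
  let r : W → V := Function.invFun π
  have hr (v : V) : π v = π (r (π v)) := (Function.invFun_eq ⟨v, rfl⟩).symm
  have key (y : V →₀ ZMod 2) : y + (y.mapDomain π).mapDomain r ∈
      (Finsupp.supported (ZMod 2) (ZMod 2) D).map (chainBoundary ends) := by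
    induction y using Finsupp.induction_linear with
    | zero => simp
    | add y z hy hz =>
      rw [Finsupp.mapDomain_add, Finsupp.mapDomain_add, add_add_add_comm]
      exact add_mem hy hz
    | single v a =>
      have := Submodule.smul_mem _ a (hπ _ _ (hr v))
      simpa [Finsupp.mapDomain_single] using this
  simpa [hx] using key x

/-- Contracting the fibres of `π`, which are connected by `hπ`, keeps the sides of the remaining
edges: a cycle of the contraction is a cycle of the original with the contracted edges left out. -/
theorem HasAlgebraicDual.contract [Finite E] {ends : E → Sym2 V} (h : HasAlgebraicDual ends)
    {π : V → W} (hπ : ∀ u v, π u = π v → Finsupp.single u 1 + Finsupp.single v 1 ∈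
      (Finsupp.supported (ZMod 2) (ZMod 2) {e | ((ends e).map π).IsDiag}).map
        (chainBoundary ends)) :
    HasAlgebraicDual fun e : {e // ¬ ((ends e).map π).IsDiag} => (ends e).map π := by
  classical
  obtain ⟨F, sides, hsides⟩ := h
  have hproj (c : E →₀ ZMod 2) : (chainBoundary ends c).mapDomain π =
      chainBoundary (fun e : {e // ¬ ((ends e).map π).IsDiag} => (ends e).map π)
        (c.subtypeDomain _) := by
    rw [← chainBoundary_map, chainBoundary_subtypeDomain fun e => (ends e).map π]
  refine ⟨F, fun e => sides e, fun c => ⟨fun hc => ?_, ?_⟩⟩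
  · obtain ⟨d, rfl⟩ : ∃ d : E →₀ ZMod 2, d.subtypeDomain _ = c :=
      ⟨c.extendDomain, Finsupp.subtypeDomain_extendDomain c⟩
    rw [← hproj] at hc
    obtain ⟨b, hb, hbd⟩ := mem_map_chainBoundary_of_mapDomain_eq_zero hπ hc
    have hbd0 : chainBoundary ends (d + b) = 0 := by
      rw [map_add, hbd, ZModModule.add_self]
    obtain ⟨q, hq⟩ := (hsides _).1 hbd0
    refine ⟨q, fun e => ?_⟩
    have hbe : b e = 0 := by
      by_contra hbe
      exact e.2 (hb (Finsupp.mem_support_iff.2 hbe))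
    rw [← hq, Finsupp.add_apply, hbe, add_zero, Finsupp.subtypeDomain_apply]
  · rintro ⟨q, hq⟩
    let d : E →₀ ZMod 2 := Finsupp.equivFunOnFinite.symm fun e => endSum q (sides e)
    have hd : c = d.subtypeDomain _ := by
      ext e
      exact hq e
    rw [hd, ← hproj, (hsides d).2 ⟨q, fun e => rfl⟩, Finsupp.mapDomain_zero]

end Boundary

section EdgeBound

variable {E V F : Type*}

lemma exists_ne_of_chainBoundary_eq_zero {ends : E → Sym2 V} (hloop : ∀ e, ¬ (ends e).IsDiag)
    {c : E →₀ ZMod 2} (hc : chainBoundary ends c = 0) {e : E} (he : c e ≠ 0) {v : V}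
    (hv : v ∈ ends e) : ∃ e', e' ≠ e ∧ c e' ≠ 0 ∧ v ∈ ends e' := by
  by_contra! hnone
  have happly : chainBoundary ends c v = c e := by
    rw [chainBoundary, Finsupp.linearCombination_apply, Finsupp.sum_apply,
      Finsupp.sum_eq_single e]
    · rw [Finsupp.smul_apply, endSum_single_apply_of_mem (hloop e) hv, smul_eq_mul, mul_one]
    · intro e' he' hne
      rw [Finsupp.smul_apply, endSum_single_apply_of_notMem (hnone e' hne he'), smul_zero]
    · simp
  exact he (by rw [← happly, hc, Finsupp.coe_zero, Pi.zero_apply])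

lemma three_le_card_support_of_chainBoundary_eq_zero {ends : E → Sym2 V}
    (hends : Function.Injective ends) (hloop : ∀ e, ¬ (ends e).IsDiag) {c : E →₀ ZMod 2}
    (hc : chainBoundary ends c = 0) (hne : c ≠ 0) : 3 ≤ c.support.card := by
  obtain ⟨e, he⟩ := Finsupp.support_nonempty_iff.2 hne
  rw [Finsupp.mem_support_iff] at he
  obtain ⟨u, v, huv⟩ : ∃ u v, ends e = s(u, v) := Sym2.exists.1 ⟨ends e, rfl⟩
  obtain ⟨e₁, h₁e, h₁, hu⟩ :=
    exists_ne_of_chainBoundary_eq_zero hloop hc he (huv ▸ Sym2.mem_mk_left u v)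
  obtain ⟨e₂, h₂e, h₂, hv⟩ :=
    exists_ne_of_chainBoundary_eq_zero hloop hc he (huv ▸ Sym2.mem_mk_right u v)
  have h₁₂ : e₁ ≠ e₂ := by
    rintro rfl
    have huv' : u ≠ v := fun h => hloop e (by rw [huv, h]; rfl)
    exact h₁e (hends (by rw [huv, (Sym2.mem_and_mem_iff huv').1 ⟨hu, hv⟩]))
  exact Finset.two_lt_card.2 ⟨e, by simpa, e₁, by simpa, e₂, by simpa, h₁e.symm, h₂e.symm, h₁₂⟩

lemma card_le_card_add_finrank_ker_chainBoundary [Finite E] [Finite V] (ends : E → Sym2 V) :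
    Nat.card E ≤ Nat.card V + Module.finrank (ZMod 2) (LinearMap.ker (chainBoundary ends)) := by
  have := Fintype.ofFinite E
  have := Fintype.ofFinite V
  have hrank := LinearMap.finrank_range_add_finrank_ker (chainBoundary ends)
  have hrange := Submodule.finrank_le (LinearMap.range (chainBoundary ends))
  rw [Module.finrank_finsupp_self] at hrank hrange
  rw [Nat.card_eq_fintype_card, Nat.card_eq_fintype_card]
  lia

open Classical in
/-- The edges having `f` as exactly one of their sides. -/
noncomputable def faceChain [Finite E] (sides : E → Sym2 F) (f : F) : E →₀ ZMod 2 :=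
  Finsupp.equivFunOnFinite.symm fun e => endSum (Pi.single f 1) (sides e)

lemma mem_sides_of_faceChain_ne_zero [Finite E] {sides : E → Sym2 F} {f : F} {e : E}
    (h : faceChain sides f e ≠ 0) : f ∈ sides e := by
  classical
  contrapose! h
  simp only [faceChain, Finsupp.equivFunOnFinite_symm_apply_apply]
  induction hxy : sides e with
  | _ x y =>
    rw [hxy, Sym2.mem_iff, not_or] at h
    rw [endSum_mk, Pi.single_eq_of_ne' h.1, Pi.single_eq_of_ne' h.2, add_zero]

lemma eq_sum_faceChain [Finite E] {sides : E → Sym2 F} {c : E →₀ ZMod 2} {q : F → ZMod 2}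
    (hq : ∀ e, c e = endSum q (sides e)) {s : Finset F} (hs : ∀ e, ∀ f ∈ sides e, f ∈ s) :
    c = ∑ f ∈ s, q f • faceChain sides f := by
  classical
  ext e
  rw [hq, Finsupp.finsetSum_apply]
  simp only [Finsupp.smul_apply, faceChain, Finsupp.equivFunOnFinite_symm_apply_apply]
  have hse := hs e
  induction hxy : sides e with
  | _ x y =>
    simp only [hxy, Sym2.mem_iff, forall_eq_or_imp, forall_eq] at hse
    simp only [endSum_mk, smul_eq_mul, mul_add, Finset.sum_add_distrib, Pi.single_apply, mul_ite,
      mul_one, mul_zero, Finset.sum_ite_eq, hse, if_true]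

lemma three_mul_finrank_le [Finite E] {sides : E → Sym2 F} {Z : Submodule (ZMod 2) (E →₀ ZMod 2)}
    (hZ : ∀ c, c ∈ Z ↔ ∃ q : F → ZMod 2, ∀ e, c e = endSum q (sides e))
    (hsupp : ∀ c ∈ Z, c ≠ 0 → 3 ≤ c.support.card) :
    3 * Module.finrank (ZMod 2) Z ≤ 2 * Nat.card E := by
  classical
  have := Fintype.ofFinite E
  let s : Finset F := Finset.univ.biUnion fun e => (sides e).toFinset
  have hs (e : E) (f : F) (hf : f ∈ sides e) : f ∈ s :=
    Finset.mem_biUnion.2 ⟨e, Finset.mem_univ e, Sym2.mem_toFinset.2 hf⟩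
  let t : Finset F := s.filter fun f => faceChain sides f ≠ 0
  have hspan : Z ≤ Submodule.span (ZMod 2) (t.image (faceChain sides)) := by
    intro c hc
    obtain ⟨q, hq⟩ := (hZ c).1 hc
    rw [eq_sum_faceChain hq hs]
    refine Submodule.sum_mem _ fun f hf => Submodule.smul_mem _ _ ?_
    by_cases h0 : faceChain sides f = 0
    · rw [h0]
      exact zero_mem _
    · exact Submodule.subset_span
        (Finset.mem_image_of_mem _ (Finset.mem_filter.2 ⟨hf, h0⟩))
  have hrank : Module.finrank (ZMod 2) Z ≤ t.card :=
    (Submodule.finrank_mono hspan).trans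
      ((finrank_span_finset_le_card _).trans Finset.card_image_le)
  calc 3 * Module.finrank (ZMod 2) Z ≤ t.card * 3 := by lia
    _ ≤ ∑ f ∈ t, (Finset.univ.filter fun e => faceChain sides f e ≠ 0).card := by
      rw [← smul_eq_mul]
      refine Finset.card_nsmul_le_sum _ _ _ fun f hf => ?_
      have hsub : (faceChain sides f).support ⊆ Finset.univ.filter (faceChain sides f · ≠ 0) :=
        fun e he => by simpa using he
      refine (hsupp _ ?_ (Finset.mem_filter.1 hf).2).trans (Finset.card_le_card hsub)
      exact (hZ _).2 ⟨Pi.single f 1, fun e => rfl⟩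
    _ = ∑ e : E, (t.filter fun f => faceChain sides f e ≠ 0).card :=
      Finset.sum_card_bipartiteAbove_eq_sum_card_bipartiteBelow _
    _ ≤ ∑ _e : E, 2 := by
      refine Finset.sum_le_sum fun e _ => ?_
      refine (Finset.card_le_card (t := (sides e).toFinset) fun f hf => ?_).trans ?_
      · exact Sym2.mem_toFinset.2 (mem_sides_of_faceChain_ne_zero (Finset.mem_filter.1 hf).2)
      · rw [Sym2.card_toFinset]
        split_ifs <;> decide
    _ = 2 * Nat.card E := by simp [mul_comm]

/-- Every face has at least three edges, every edge at most two faces, and the faces span the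
cycle space. -/
theorem HasAlgebraicDual.card_le_three_mul_card [Finite E] [Finite V] {ends : E → Sym2 V}
    (h : HasAlgebraicDual ends) (hends : Function.Injective ends)
    (hloop : ∀ e, ¬ (ends e).IsDiag) : Nat.card E ≤ 3 * Nat.card V := by
  obtain ⟨F, sides, hsides⟩ := h
  have hfaces := three_mul_finrank_le (Z := LinearMap.ker (chainBoundary ends)) hsides
    fun c hc => three_le_card_support_of_chainBoundary_eq_zero hends hloop hc
  have hrank := card_le_card_add_finrank_ker_chainBoundary ends
  lia

end EdgeBound

/-- The ends of the edges of the square grid: `(z, true)` runs to the right of `z` and `(z, false)`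
runs upwards. -/
def gridEnds : (ℤ × ℤ) × Bool → Sym2 (ℤ × ℤ)
  | (z, true) => s(z, z + (1, 0))
  | (z, false) => s(z, z + (0, 1))

/-- The two unit squares adjacent to an edge of the grid; a square is named by its lower left
corner. -/
def gridSides : (ℤ × ℤ) × Bool → Sym2 (ℤ × ℤ)
  | (z, true) => s(z, z - (0, 1))
  | (z, false) => s(z, z - (1, 0))

/-- The sum of a finitely supported function over the horizontal ray going left from a point. -/
noncomputable def leftRaySum : (ℤ × ℤ →₀ ZMod 2) →ₗ[ZMod 2] (ℤ × ℤ → ZMod 2) :=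
  Finsupp.linearCombination (ZMod 2) fun w z => if w.1 ≤ z.1 ∧ w.2 = z.2 then 1 else 0

/-- The number modulo 2 of edges crossed by a ray going left from the centre of a unit square. -/
noncomputable def leftCrossings : ((ℤ × ℤ) × Bool →₀ ZMod 2) →ₗ[ZMod 2] (ℤ × ℤ → ZMod 2) :=
  Finsupp.linearCombination (ZMod 2) fun e z =>
    if e.2 = false ∧ e.1.1 ≤ z.1 ∧ e.1.2 = z.2 then 1 else 0

section Grid

variable (c : (ℤ × ℤ) × Bool →₀ ZMod 2) (z : ℤ × ℤ)

lemma leftRaySum_single (w : ℤ × ℤ) (a : ZMod 2) :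
    leftRaySum (Finsupp.single w a) z = if w.1 ≤ z.1 ∧ w.2 = z.2 then a else 0 := by
  simp [leftRaySum]

lemma leftCrossings_single (e : (ℤ × ℤ) × Bool) (a : ZMod 2) :
    leftCrossings (Finsupp.single e a) z =
      if e.2 = false ∧ e.1.1 ≤ z.1 ∧ e.1.2 = z.2 then a else 0 := by
  simp [leftCrossings]

lemma chainBoundary_gridEnds_apply : chainBoundary gridEnds c z =
    c (z, true) + c (z - (1, 0), true) + (c (z, false) + c (z - (0, 1), false)) := by
  induction c using Finsupp.induction_linear with
  | zero => simp
  | add c d hc hd =>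
    simp only [map_add, Finsupp.add_apply, hc, hd]
    abel
  | single e a =>
    obtain ⟨w, _ | _⟩ := e <;>
      simp [chainBoundary_single, gridEnds, Finsupp.single_apply, eq_sub_iff_add_eq]

lemma leftCrossings_add_left :
    leftCrossings c z + leftCrossings c (z - (1, 0)) = c (z, false) := by
  induction c using Finsupp.induction_linear with
  | zero => simp
  | add c d hc hd =>
    rw [map_add, Pi.add_apply, Pi.add_apply, add_add_add_comm, hc, hd, Finsupp.add_apply]
  | single e a =>
    obtain ⟨⟨x, y⟩, _ | _⟩ := e <;> obtain ⟨i, j⟩ := z <;>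
      simp only [leftCrossings_single, Finsupp.single_apply, Prod.mk.injEq, Prod.mk_sub_mk]
    · have := ZModModule.add_self a
      split_ifs <;> grind
    · simp

lemma leftCrossings_add_below :
    leftCrossings c z + leftCrossings c (z - (0, 1)) =
      c (z, true) + leftRaySum (chainBoundary gridEnds c) z := by
  induction c using Finsupp.induction_linear with
  | zero => simp
  | add c d hc hd =>
    simp only [map_add, Pi.add_apply, Finsupp.add_apply]
    rw [add_add_add_comm, hc, hd, add_add_add_comm]
  | single e a =>
    have := ZModModule.add_self a
    obtain ⟨⟨x, y⟩, _ | _⟩ := e <;> obtain ⟨i, j⟩ := z <;>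
      simp only [leftCrossings_single, chainBoundary_single, gridEnds, endSum_mk, smul_add,
        Finsupp.smul_single, smul_eq_mul, mul_one, map_add, Pi.add_apply, leftRaySum_single,
        Finsupp.single_apply, Prod.mk.injEq, Prod.mk_sub_mk, Prod.mk_add_mk] <;>
      split_ifs <;> grind

theorem hasAlgebraicDual_gridEnds : HasAlgebraicDual gridEnds := by
  refine ⟨ℤ × ℤ, gridSides, fun c => ⟨fun hc => ⟨leftCrossings c, ?_⟩, ?_⟩⟩
  · rintro ⟨z, _ | _⟩
    · exact (leftCrossings_add_left c z).symm
    · have := leftCrossings_add_below c z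
      rw [hc, map_zero, Pi.zero_apply, add_zero] at this
      exact this.symm
  · rintro ⟨q, hq⟩
    ext z
    rw [chainBoundary_gridEnds_apply]
    simp only [hq, gridSides, endSum_mk, sub_right_comm z (0, 1), Finsupp.coe_zero, Pi.zero_apply]
    linear_combination (q z + q (z - (0, 1)) + q (z - (1, 0)) + q (z - (1, 0) - (0, 1))) *
      (CharTwo.two_eq_zero (R := ZMod 2))

/-- The square grid. -/
def gridGraph : SimpleGraph (ℤ × ℤ) := SimpleGraph.fromEdgeSet (Set.range gridEnds)

theorem hasAlgebraicDual_gridGraph :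
    HasAlgebraicDual ((↑) : gridGraph.edgeSet → Sym2 (ℤ × ℤ)) := by
  have hrange (e : gridGraph.edgeSet) : ∃ g, gridEnds g = e := by
    have he : (e : Sym2 (ℤ × ℤ)) ∈ (SimpleGraph.fromEdgeSet (Set.range gridEnds)).edgeSet := e.2
    rw [SimpleGraph.edgeSet_fromEdgeSet] at he
    exact he.1
  choose g hg using hrange
  have hinj : Function.Injective g := fun e e' h => Subtype.ext (by rw [← hg, ← hg, h])
  simpa only [hg] using hasAlgebraicDual_gridEnds.comp_injective hinj

end Grid

section Minors

variable {E P S V V' : Type*}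

theorem HasAlgebraicDual.of_injective_hom {G : SimpleGraph V}
    (hG : HasAlgebraicDual ((↑) : G.edgeSet → Sym2 V)) {G' : SimpleGraph V'} (f : G' →g G)
    (hf : Function.Injective f) : HasAlgebraicDual ((↑) : G'.edgeSet → Sym2 V') :=
  .of_map_injective (f := f) hf <|
    hG.comp_injective (g := f.mapEdgeSet) (SimpleGraph.Hom.mapEdgeSet.injective f hf)

lemma single_add_single_mem_map_chainBoundary_of_reachable {G : SimpleGraph V'}
    {ends : E → Sym2 V} {D : Set E} {φ : V' → V}
    (hφ : ∀ a b, G.Adj a b → ∃ e ∈ D, ends e = s(φ a, φ b)) {u v : V'} (huv : G.Reachable u v) :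
    Finsupp.single (φ u) 1 + Finsupp.single (φ v) 1 ∈
      (Finsupp.supported (ZMod 2) (ZMod 2) D).map (chainBoundary ends) := by
  obtain ⟨p⟩ := huv
  induction p with
  | nil =>
    rw [ZModModule.add_self]
    exact zero_mem _
  | @cons a b v hab _ ih =>
    obtain ⟨e, heD, he⟩ := hφ a b hab
    have hedge : Finsupp.single (φ a) 1 + Finsupp.single (φ b) 1 ∈
        (Finsupp.supported (ZMod 2) (ZMod 2) D).map (chainBoundary ends) := by
      refine ⟨Finsupp.single e 1, Finsupp.single_mem_supported _ _ heD, ?_⟩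
      rw [chainBoundary_single, he, endSum_mk, one_smul]
    have hsum := add_mem hedge ih
    rwa [add_assoc, ← add_assoc (Finsupp.single (φ b) 1), ZModModule.add_self, zero_add] at hsum

theorem card_edgeSet_le_of_branchSets [Finite S] {G : SimpleGraph P}
    (hG : HasAlgebraicDual ((↑) : G.edgeSet → Sym2 P)) {X : S → Set P}
    (hfin : ∀ s, (X s).Finite) (hdisj : Pairwise (Function.onFun Disjoint X))
    (hconn : ∀ s, (G.induce (X s)).Preconnected) {H : SimpleGraph S}
    (hH : ∀ s t, H.Adj s t → ∃ u ∈ X s, ∃ v ∈ X t, G.Adj u v) :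
    Nat.card H.edgeSet ≤ 3 * Nat.card S := by
  have := fun s => (hfin s).to_subtype
  let G' : SimpleGraph (Σ s, X s) := G.comap fun x => x.2
  have hinj : Function.Injective fun x : Σ s, X s => (x.2 : P) :=
    Subtype.val_injective.comp (Set.sigmaToiUnion_injective X hdisj)
  have hG' : HasAlgebraicDual ((↑) : G'.edgeSet → Sym2 (Σ s, X s)) :=
    hG.of_injective_hom (SimpleGraph.Hom.comap _ G) hinj
  have hminor := hG'.contract (π := Sigma.fst) <| by
    rintro ⟨s, u⟩ ⟨_, v⟩ rfl
    refine single_add_single_mem_map_chainBoundary_of_reachable (φ := Sigma.mk s) ?_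
      (hconn s u v)
    exact fun a b hab => ⟨⟨s(⟨s, a⟩, ⟨s, b⟩), hab⟩, rfl, rfl⟩
  have hlift (e : H.edgeSet) :
      ∃ e' : {e : G'.edgeSet // ¬ ((e : Sym2 (Σ s, X s)).map Sigma.fst).IsDiag},
        ((e' : G'.edgeSet) : Sym2 (Σ s, X s)).map Sigma.fst = e := by
    obtain ⟨⟨s, t⟩, hst⟩ := e
    obtain ⟨u, hu, v, hv, huv⟩ := hH s t hst
    exact ⟨⟨⟨s(⟨s, u, hu⟩, ⟨t, v, hv⟩), huv⟩, hst.ne⟩, rfl⟩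
  choose g hg using hlift
  have hginj : Function.Injective g := fun e e' h => Subtype.ext (by rw [← hg, ← hg, h])
  have hHdual : HasAlgebraicDual ((↑) : H.edgeSet → Sym2 S) := by
    simpa only [hg] using hminor.comp_injective hginj
  exact hHdual.card_le_three_mul_card Subtype.val_injective
    fun e => H.not_isDiag_of_mem_edgeSet e.2

end Minors

section GraphCount

variable {J P S V : Type*}

lemma connected_map_of_surjective {G : SimpleGraph V} (hG : G.Connected) {f : V → S}
    (hf : Function.Surjective f) : (G.map f).Connected := by
  have hreach {u v : V} (p : G.Walk u v) : (G.map f).Reachable (f u) (f v) := by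
    induction p with
    | nil => rfl
    | @cons u w v huw _ ih =>
      by_cases h : f u = f w
      · rwa [h]
      · exact (SimpleGraph.map_adj_apply' huw h).reachable.trans ih
  refine (SimpleGraph.connected_iff _).2 ⟨fun s t => ?_, hG.nonempty.map f⟩
  obtain ⟨⟨u, rfl⟩, v, rfl⟩ := hf s, hf t
  exact (hG u v).elim hreach

lemma card_range_le_card_edgeSet_map_add_one [Finite S] {G : SimpleGraph V} (hG : G.Connected)
    (f : V → S) : Nat.card (Set.range f) ≤ Nat.card (G.map f).edgeSet + 1 := by
  have hconn := connected_map_of_surjective hG (Set.rangeFactorization_surjective (f := f))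
  let val : G.map (Set.rangeFactorization f) →g G.map f :=
    ⟨Subtype.val, fun ⟨hne, u, v, huv, hu, hv⟩ =>
      ⟨fun h => hne (Subtype.ext h), u, v, huv, congrArg Subtype.val hu, congrArg Subtype.val hv⟩⟩
  have hedges := Nat.card_le_card_of_injective val.mapEdgeSet
    (SimpleGraph.Hom.mapEdgeSet.injective val Subtype.val_injective)
  exact hconn.card_vert_le_card_edgeSet_add_one.trans (by lia)

lemma exists_parent {G : SimpleGraph V} (hG : G.Connected) {M : Set V} (hM : M.Nonempty) :
    ∃ (par : V → V) (d : V → ℕ), (∀ z ∈ M, par z = z) ∧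
      ∀ z ∉ M, G.Adj z (par z) ∧ d (par z) + 1 = d z := by
  classical
  obtain ⟨w, hw⟩ := hM
  have hstep (z : V) (hz : z ∉ M) : ∃ y, G.Adj z y ∧ G.dist y w + 1 = G.dist z w := by
    obtain ⟨p, hp⟩ := hG.exists_walk_length_eq_dist z w
    cases p with
    | nil => exact absurd hw hz
    | @cons _ y _ hzy q =>
      have htriangle := hG.dist_triangle (u := z) (v := y) (w := w)
      have hq := SimpleGraph.dist_le q
      rw [SimpleGraph.Walk.length_cons] at hp
      refine ⟨_, hzy, le_antisymm (by lia) (htriangle.trans ?_)⟩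
      rw [SimpleGraph.dist_eq_one_iff_adj.2 hzy, add_comm]
  choose! par hpar using hstep
  refine ⟨fun z => if z ∈ M then z else par z, (G.dist · w), fun z hz => if_pos hz,
    fun z hz => ?_⟩
  simpa only [if_neg hz] using hpar z hz

/-- Follow a fixed choice of shortest paths until a marked vertex is met. -/
lemma exists_labelling {G : SimpleGraph V} (hG : G.Connected) {M : S → Set V}
    (hdisj : Pairwise (Function.onFun Disjoint M)) (hne : ∃ s, (M s).Nonempty) :
    ∃ label : V → S, (∀ s, ∀ z ∈ M s, label z = s) ∧
      ∀ z, ∃ w ∈ M (label z), ∃ p : G.Walk z w, ∀ x ∈ p.support, label x = label z := by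
  have huniq {s t : S} {z : V} (hs : z ∈ M s) (ht : z ∈ M t) : s = t :=
    hdisj.eq (Set.not_disjoint_iff.2 ⟨z, hs, ht⟩)
  obtain ⟨par, d, hfix, hpar⟩ := exists_parent (M := ⋃ s, M s) hG (Set.nonempty_iUnion.2 hne)
  let root (z : V) : V := par^[d z] z
  have hroot_marked {z : V} (hz : z ∈ ⋃ s, M s) : root z = z := Function.iterate_fixed (hfix z hz) _
  have hroot_par {z : V} (hz : z ∉ ⋃ s, M s) : root (par z) = root z := by
    simp only [root]
    rw [← (hpar z hz).2, Function.iterate_succ_apply]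
  have hroot (z : V) : root z ∈ ⋃ s, M s ∧
      ∃ p : G.Walk z (root z), ∀ x ∈ p.support, root x = root z := by
    induction hn : d z using Nat.strong_induction_on generalizing z with
    | _ n ih =>
      by_cases hz : z ∈ ⋃ s, M s
      · rw [hroot_marked hz]
        exact ⟨hz, .nil, by simp [hroot_marked hz]⟩
      · obtain ⟨hadj, hd⟩ := hpar z hz
        have hpar_root := ih _ (by lia) (par z) rfl
        rw [hroot_par hz] at hpar_root
        obtain ⟨hmem, p, hp⟩ := hpar_root
        exact ⟨hmem, p.cons hadj, by simpa using hp⟩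
  choose label hlabel using fun z => Set.mem_iUnion.1 (hroot z).1
  refine ⟨label, fun s z hz => huniq (z := z) ?_ hz, fun z => ?_⟩
  · have hmem := hlabel z
    rwa [hroot_marked (Set.mem_iUnion_of_mem s hz)] at hmem
  · obtain ⟨p, hp⟩ := (hroot z).2
    exact ⟨root z, hlabel z, p, fun x hx => huniq (hp x hx ▸ hlabel x) (hlabel z)⟩

lemma preconnected_induce_of_forall_exists_walk {G : SimpleGraph P} {X W : Set P} (hWX : W ⊆ X)
    (hW : (G.induce W).Preconnected)
    (hwalk : ∀ x ∈ X, ∃ w ∈ W, ∃ p : G.Walk x w, ∀ y ∈ p.support, y ∈ X) :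
    (G.induce X).Preconnected := by
  have key (x : X) : ∃ w : W, (G.induce X).Reachable x (Set.inclusion hWX w) := by
    obtain ⟨w, hw, p, hp⟩ := hwalk x x.2
    exact ⟨⟨w, hw⟩, ⟨p.induce X hp⟩⟩
  intro x y
  obtain ⟨⟨u, hxu⟩, v, hyv⟩ := key x, key y
  exact hxu.trans (((hW u v).map (G.induceHomOfLE hWX).toHom).trans hyv.symm)

lemma sum_card_edgeSet_eq_card_edgeSet_iSup [Finite S] [Fintype J] {H : J → SimpleGraph S}
    (hdisj : Pairwise (Function.onFun Disjoint fun τ => (H τ).edgeSet)) :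
    ∑ τ, Nat.card (H τ).edgeSet = Nat.card (⨆ τ, H τ).edgeSet := by
  rw [← Nat.card_sigma, SimpleGraph.edgeSet_iSup]
  exact Nat.card_congr (Set.unionEqSigmaOfDisjoint hdisj).symm

section Labelled

variable {G : SimpleGraph P} {W : S → Set P} {T : J → Set P} {label : ∀ τ, T τ → S}

lemma eq_of_mem_union_image_label (hW : Pairwise (Function.onFun Disjoint W))
    (hT : ∀ τ τ', τ ≠ τ' → T τ ∩ T τ' ⊆ ⋃ s, W s)
    (hmem : ∀ τ s (z : T τ), (z : P) ∈ W s → label τ z = s) {s t : S} {x : P}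
    (hs : x ∈ W s ∪ ⋃ τ, (↑) '' (label τ ⁻¹' {s})) (ht : x ∈ W t ∪ ⋃ τ, (↑) '' (label τ ⁻¹' {t})) :
    s = t := by
  simp only [Set.mem_union, Set.mem_iUnion] at hs ht
  rcases hs with hs | ⟨τ, z, rfl, rfl⟩ <;> rcases ht with ht | ⟨τ', z', rfl, hz'⟩
  · exact hW.eq (Set.not_disjoint_iff.2 ⟨x, hs, ht⟩)
  · exact (hmem τ' s z' (hz' ▸ hs)).symm
  · exact hmem τ t z ht
  · obtain rfl | hne := eq_or_ne τ τ'
    · rw [Subtype.ext hz']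
    · obtain ⟨r, hr⟩ := Set.mem_iUnion.1 (hT τ τ' hne ⟨z.2, hz' ▸ z'.2⟩)
      rw [hmem τ r z hr, hmem τ' r z' (hz' ▸ hr)]

lemma card_edgeSet_iSup_map_label_le [Finite S] [Finite J]
    (hG : HasAlgebraicDual ((↑) : G.edgeSet → Sym2 P))
    (hWfin : ∀ s, (W s).Finite) (hTfin : ∀ τ, (T τ).Finite)
    (hWconn : ∀ s, (G.induce (W s)).Preconnected) (hW : Pairwise (Function.onFun Disjoint W))
    (hT : ∀ τ τ', τ ≠ τ' → T τ ∩ T τ' ⊆ ⋃ s, W s)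
    (hmem : ∀ τ s (z : T τ), (z : P) ∈ W s → label τ z = s)
    (hwalk : ∀ τ z, ∃ w : T τ, (w : P) ∈ W (label τ z) ∧
      ∃ p : (G.induce (T τ)).Walk z w, ∀ x ∈ p.support, label τ x = label τ z) :
    Nat.card (⨆ τ, (G.induce (T τ)).map (label τ)).edgeSet ≤ 3 * Nat.card S := by
  have := fun τ => (hTfin τ).to_subtype
  have hbranch {τ : J} (z : T τ) :
      (z : P) ∈ W (label τ z) ∪ ⋃ τ', (↑) '' (label τ' ⁻¹' {label τ z}) :=
    Or.inr (Set.mem_iUnion.2 ⟨τ, z, rfl, rfl⟩)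
  refine card_edgeSet_le_of_branchSets hG (X := fun s => W s ∪ ⋃ τ, (↑) '' (label τ ⁻¹' {s}))
    (fun s => ?_) (fun s t hst => ?_) (fun s => ?_) (fun s t hst => ?_)
  · exact (hWfin s).union (Set.finite_iUnion fun τ => (Set.toFinite _).image _)
  · exact Set.disjoint_left.2 fun x hs ht => hst (eq_of_mem_union_image_label hW hT hmem hs ht)
  · refine preconnected_induce_of_forall_exists_walk Set.subset_union_left (hWconn s) ?_
    rintro x (hx | hx)
    · exact ⟨x, hx, .nil, by simp [hx]⟩
    · obtain ⟨τ, z, rfl, rfl⟩ := Set.mem_iUnion.1 hx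
      obtain ⟨w, hw, p, hp⟩ := hwalk τ z
      refine ⟨w, hw, p.map (SimpleGraph.Embedding.induce (T τ)).toHom, fun y hy => ?_⟩
      have hsupport := SimpleGraph.Walk.support_map (SimpleGraph.Embedding.induce (T τ)).toHom p
      obtain ⟨y, hyp, rfl⟩ := List.mem_map.1 (hsupport ▸ hy)
      rw [← hp y hyp]
      exact hbranch y
  · obtain ⟨τ, -, u, v, huv, rfl, rfl⟩ := SimpleGraph.iSup_adj.1 hst
    exact ⟨u, hbranch u, v, hbranch v, huv⟩

end Labelled

/-- Contract the labelled parts of every `T τ`: what is left of `T τ` is a connected graph on the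
indices `s` for which `W s` meets `T τ`, and these graphs are edge-disjoint by `huniq`. -/
theorem sum_card_meeting_le [Finite S] [Fintype J] {G : SimpleGraph P}
    (hG : HasAlgebraicDual ((↑) : G.edgeSet → Sym2 P)) {W : S → Set P} {T : J → Set P}
    (hWfin : ∀ s, (W s).Finite) (hTfin : ∀ τ, (T τ).Finite)
    (hWconn : ∀ s, (G.induce (W s)).Preconnected) (hTconn : ∀ τ, (G.induce (T τ)).Preconnected)
    (hW : Pairwise (Function.onFun Disjoint W))
    (hT : ∀ τ τ', τ ≠ τ' → T τ ∩ T τ' ⊆ ⋃ s, W s)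
    (huniq : ∀ τ τ', τ ≠ τ' → {s | (T τ ∩ W s).Nonempty ∧ (T τ' ∩ W s).Nonempty}.Subsingleton)
    (hne : ∀ τ, ∃ s, (T τ ∩ W s).Nonempty) :
    ∑ τ, Nat.card {s // (T τ ∩ W s).Nonempty} ≤ 3 * Nat.card S + Nat.card J := by
  have hconn (τ : J) : (G.induce (T τ)).Connected := by
    obtain ⟨-, z, hz, -⟩ := hne τ
    exact (SimpleGraph.connected_iff _).2 ⟨hTconn τ, ⟨z, hz⟩⟩
  have hlabel (τ : J) := exists_labelling (hconn τ) (M := fun s => (↑) ⁻¹' W s)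
    (fun s t hst => (hW hst).preimage _)
    ((hne τ).imp fun s ⟨z, hz, hzs⟩ => ⟨⟨z, hz⟩, hzs⟩)
  choose label hmem hwalk using hlabel
  let H (τ : J) : SimpleGraph S := (G.induce (T τ)).map (label τ)
  have htree (τ : J) : Nat.card {s // (T τ ∩ W s).Nonempty} ≤ Nat.card (H τ).edgeSet + 1 := by
    refine le_trans ?_ (card_range_le_card_edgeSet_map_add_one (hconn τ) (label τ))
    refine Nat.card_mono (Set.toFinite _) ?_
    rintro s ⟨z, hz, hzs⟩
    exact ⟨⟨z, hz⟩, hmem τ s _ hzs⟩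
  have hmeets (τ : J) (z : T τ) : (T τ ∩ W (label τ z)).Nonempty := by
    obtain ⟨w, hw, -⟩ := hwalk τ z
    exact ⟨w, w.2, hw⟩
  have hends {τ : J} {s t : S} (h : (H τ).Adj s t) :
      (T τ ∩ W s).Nonempty ∧ (T τ ∩ W t).Nonempty := by
    obtain ⟨-, u, v, -, rfl, rfl⟩ := h
    exact ⟨hmeets τ u, hmeets τ v⟩
  have hdisj : Pairwise (Function.onFun Disjoint fun τ => (H τ).edgeSet) := by
    refine fun τ τ' hττ' => Set.disjoint_left.2 fun e he he' => ?_
    induction e with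
    | _ s t =>
      exact (H τ).ne_of_adj he (huniq τ τ' hττ' ⟨(hends he).1, (hends he').1⟩
        ⟨(hends he).2, (hends he').2⟩)
  calc ∑ τ, Nat.card {s // (T τ ∩ W s).Nonempty} ≤ ∑ τ, (Nat.card (H τ).edgeSet + 1) :=
        Finset.sum_le_sum fun τ _ => htree τ
    _ = Nat.card (⨆ τ, H τ).edgeSet + Nat.card J := by
      rw [Finset.sum_add_distrib, sum_card_edgeSet_eq_card_edgeSet_iSup hdisj, Finset.sum_const,
        Finset.card_univ, smul_eq_mul, mul_one, ← Nat.card_eq_fintype_card]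
    _ ≤ 3 * Nat.card S + Nat.card J := by
      gcongr
      exact card_edgeSet_iSup_map_label_le hG hWfin hTfin hWconn hW hT hmem fun τ z =>
        (hwalk τ z).imp fun w ⟨hw, hp⟩ => ⟨hw, hp⟩

end GraphCount

section Pixels

open Filter Topology

/-- The open square of side `2 * ε` around the point of the lattice of mesh `ε` with coordinates
`z`. Adjacent squares overlap, so these squares cover the plane. -/
def pixel (ε : ℝ) (z : ℤ × ℤ) : Set (ℝ × ℝ) := Metric.ball (ε * z.1, ε * z.2) ε

/-- The lattice points whose pixel meets `K`: a discrete approximation of `K`. -/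
def pixelation (ε : ℝ) (K : Set (ℝ × ℝ)) : Set (ℤ × ℤ) := {z | (K ∩ pixel ε z).Nonempty}

variable {ε : ℝ} {K K' D : Set (ℝ × ℝ)} {x : ℝ × ℝ} {z w : ℤ × ℤ}

lemma mem_pixel : x ∈ pixel ε z ↔ |x.1 - ε * z.1| < ε ∧ |x.2 - ε * z.2| < ε := by
  rw [pixel, Metric.mem_ball, Prod.dist_eq, max_lt_iff, Real.dist_eq, Real.dist_eq]

lemma exists_mem_pixel (hε : 0 < ε) (x : ℝ × ℝ) : ∃ z, x ∈ pixel ε z := by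
  have hfloor (t : ℝ) : |t - ε * ⌊t / ε⌋| < ε := by
    have hle := (le_div_iff₀ hε).1 (Int.floor_le (t / ε))
    have hlt := (div_lt_iff₀ hε).1 (Int.lt_floor_add_one (t / ε))
    rw [abs_lt]
    constructor <;> linarith
  exact ⟨(⌊x.1 / ε⌋, ⌊x.2 / ε⌋), mem_pixel.2 ⟨hfloor _, hfloor _⟩⟩

lemma eq_or_eq_add_one_or_of_abs_sub_mul_lt {t : ℝ} {a b : ℤ} (ha : |t - ε * a| < ε)
    (hb : |t - ε * b| < ε) : a = b ∨ b = a + 1 ∨ a = b + 1 := by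
  have hε := (abs_nonneg _).trans_lt ha
  rw [abs_lt] at ha hb
  have hab : (a : ℝ) < b + 2 := lt_of_mul_lt_mul_left (by linarith) hε.le
  have hba : (b : ℝ) < a + 2 := lt_of_mul_lt_mul_left (by linarith) hε.le
  norm_cast at hab hba
  lia

lemma gridGraph_adj_right (a b : ℤ) : gridGraph.Adj (a, b) (a + 1, b) :=
  (SimpleGraph.fromEdgeSet_adj _).2 ⟨⟨((a, b), true), by simp [gridEnds]⟩, by simp⟩

lemma gridGraph_adj_up (a b : ℤ) : gridGraph.Adj (a, b) (a, b + 1) :=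
  (SimpleGraph.fromEdgeSet_adj _).2 ⟨⟨((a, b), false), by simp [gridEnds]⟩, by simp⟩

/-- The detour over the corner `(w.1, z.2)` stays among the pixels that contain the common point. -/
lemma reachable_of_mem_pixel (hx : x ∈ K) (z w : pixelation ε K) (hz : x ∈ pixel ε z)
    (hw : x ∈ pixel ε w) : (gridGraph.induce (pixelation ε K)).Reachable z w := by
  obtain ⟨⟨a, b⟩, hab⟩ := z
  obtain ⟨⟨c, d⟩, hcd⟩ := w
  rw [mem_pixel] at hz hw
  have hcorner : (c, b) ∈ pixelation ε K := ⟨x, hx, mem_pixel.2 ⟨hw.1, hz.2⟩⟩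
  have hreach {u v : pixelation ε K} (h : gridGraph.Adj u v) :
      (gridGraph.induce (pixelation ε K)).Reachable u v := SimpleGraph.Adj.reachable h
  refine SimpleGraph.Reachable.trans (v := ⟨(c, b), hcorner⟩) ?_ ?_
  · obtain rfl | rfl | rfl := eq_or_eq_add_one_or_of_abs_sub_mul_lt hz.1 hw.1
    exacts [.refl _, hreach (gridGraph_adj_right a b), (hreach (gridGraph_adj_right c b)).symm]
  · obtain rfl | rfl | rfl := eq_or_eq_add_one_or_of_abs_sub_mul_lt hz.2 hw.2
    exacts [.refl _, hreach (gridGraph_adj_up c b), (hreach (gridGraph_adj_up c d)).symm]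

lemma preconnected_induce_pixelation (hε : 0 < ε) (hK : IsPreconnected K) :
    (gridGraph.induce (pixelation ε K)).Preconnected := by
  have hpixel {x : ℝ × ℝ} (hx : x ∈ K) : ∃ z : pixelation ε K, x ∈ pixel ε z :=
    (exists_mem_pixel hε x).elim fun z hz => ⟨⟨z, x, hx, hz⟩, hz⟩
  have key {x y : ℝ × ℝ} (hx : x ∈ K) (hy : y ∈ K) : ∀ z w : pixelation ε K, x ∈ pixel ε z →
      y ∈ pixel ε w → (gridGraph.induce (pixelation ε K)).Reachable z w := by
    refine hK.induction₂ (fun x y => ∀ z w : pixelation ε K, x ∈ pixel ε z → y ∈ pixel ε w →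
      (gridGraph.induce (pixelation ε K)).Reachable z w) (fun x hx => ?_)
      (fun x y v _ hy _ hxy hyv z w hz hw => ?_)
      (fun x y _ _ hxy z w hz hw => (hxy w z hw hz).symm) hx hy
    · obtain ⟨v, hv⟩ := hpixel hx
      have hnear : ∀ᶠ y in 𝓝[K] x, y ∈ pixel ε v :=
        mem_nhdsWithin_of_mem_nhds (Metric.isOpen_ball.mem_nhds hv)
      filter_upwards [self_mem_nhdsWithin, hnear] with y hy hyv z w hz hw
      exact (reachable_of_mem_pixel hx z v hz hv).trans (reachable_of_mem_pixel hy v w hyv hw)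
    · obtain ⟨u, hu⟩ := hpixel hy
      exact (hxy z u hz hu).trans (hyv u w hu hw)
  rintro ⟨z, x, hx, hz⟩ ⟨w, y, hy, hw⟩
  exact key hx hy _ _ hz hw

lemma finite_pixelation (hε : 0 < ε) (hK : Bornology.IsBounded K) : (pixelation ε K).Finite := by
  obtain ⟨r, hr⟩ := (Metric.isBounded_iff_subset_closedBall 0).1 hK
  refine (isCompact_closedBall (0 : ℤ × ℤ) ((r + ε) / ε)).finite_of_discrete.subset ?_
  rintro z ⟨x, hx, hxz⟩
  have hx0 := mem_closedBall_zero_iff.1 (hr hx)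
  have hbound {s : ℝ} {a : ℤ} (hs : |s| ≤ r) (hsa : |s - ε * a| < ε) : ‖a‖ ≤ (r + ε) / ε := by
    rw [Int.norm_eq_abs, le_div_iff₀ hε, ← abs_of_pos hε, ← abs_mul, abs_of_pos hε, mul_comm]
    linarith [abs_sub_abs_le_abs_sub (ε * a) s, abs_sub_comm s (ε * a)]
  rw [mem_closedBall_zero_iff, norm_prod_le_iff]
  exact ⟨hbound ((norm_fst_le x).trans hx0) (mem_pixel.1 hxz).1,
    hbound ((norm_snd_le x).trans hx0) (mem_pixel.1 hxz).2⟩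

lemma eventually_pixelation_inter_subset (hK : IsCompact K) (hK' : IsClosed K')
    (hD : K ∩ K' ⊆ interior D) :
    ∀ᶠ ε in 𝓝[>] 0, pixelation ε K ∩ pixelation ε K' ⊆ pixelation ε D := by
  have hdisj : Disjoint (K \ interior D) K' :=
    Set.disjoint_left.2 fun x hx hx' => hx.2 (hD ⟨hx.1, hx'⟩)
  obtain ⟨δ, hδ, hthick⟩ := hdisj.exists_thickenings (hK.diff isOpen_interior) hK'
  filter_upwards [Ioo_mem_nhdsGT (half_pos hδ)] with ε hε
  rintro z ⟨⟨x, hx, hxz⟩, y, hy, hyz⟩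
  refine ⟨x, interior_subset (by_contra fun hxD => ?_), hxz⟩
  have hdist : dist x y < δ := by
    have htriangle := dist_triangle_right x y (ε * z.1, ε * z.2)
    linarith [hε.2, Metric.mem_ball.1 hxz, Metric.mem_ball.1 hyz]
  exact Set.disjoint_left.1 hthick (Metric.self_subset_thickening hδ _ ⟨hx, hxD⟩)
    (Metric.mem_thickening_iff.2 ⟨y, hy, hdist⟩)

end Pixels

section Plane

open Filter Topology

variable {J S : Type*}

lemma pixelation_iUnion (ε : ℝ) (D : S → Set (ℝ × ℝ)) :
    pixelation ε (⋃ s, D s) = ⋃ s, pixelation ε (D s) := by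
  ext z
  simp only [pixelation, Set.iUnion_inter, Set.nonempty_iUnion, Set.mem_ofPred_eq, Set.mem_iUnion]

lemma eventually_disjoint_pixelation {K K' : Set (ℝ × ℝ)} (hK : IsCompact K) (hK' : IsClosed K')
    (h : Disjoint K K') : ∀ᶠ ε in 𝓝[>] 0, Disjoint (pixelation ε K) (pixelation ε K') := by
  have hinter : K ∩ K' ⊆ interior ∅ := h.inter_eq.subset.trans (Set.empty_subset _)
  filter_upwards [eventually_pixelation_inter_subset hK hK' hinter] with ε hε
  exact Set.disjoint_left.2 fun z hz hz' => by simpa [pixelation] using hε ⟨hz, hz'⟩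

lemma eventually_nonempty_pixelation_inter_iff {K K' : Set (ℝ × ℝ)} (hK : IsCompact K)
    (hK' : IsClosed K') :
    ∀ᶠ ε in 𝓝[>] 0, (pixelation ε K ∩ pixelation ε K').Nonempty ↔ (K ∩ K').Nonempty := by
  by_cases h : (K ∩ K').Nonempty
  · filter_upwards [self_mem_nhdsWithin] with ε hε
    obtain ⟨x, hx, hx'⟩ := h
    obtain ⟨z, hz⟩ := exists_mem_pixel hε x
    exact iff_of_true ⟨z, ⟨x, hx, hz⟩, x, hx', hz⟩ ⟨x, hx, hx'⟩
  · have hdisj := Set.disjoint_iff_inter_eq_empty.2 (Set.not_nonempty_iff_eq_empty.1 h)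
    filter_upwards [eventually_disjoint_pixelation hK hK' hdisj] with ε hε
    exact iff_of_false (Set.not_nonempty_iff_eq_empty.2 hε.inter_eq) h

theorem sum_card_meeting_le_of_isCompact [Finite S] [Fintype J] {D : S → Set (ℝ × ℝ)}
    {K : J → Set (ℝ × ℝ)} (hDcomp : ∀ s, IsCompact (D s)) (hDconn : ∀ s, IsPreconnected (D s))
    (hKcomp : ∀ τ, IsCompact (K τ)) (hKconn : ∀ τ, IsPreconnected (K τ))
    (hD : Pairwise (Function.onFun Disjoint D))
    (hK : ∀ τ τ', τ ≠ τ' → K τ ∩ K τ' ⊆ interior (⋃ s, D s))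
    (huniq : ∀ τ τ', τ ≠ τ' → {s | (K τ ∩ D s).Nonempty ∧ (K τ' ∩ D s).Nonempty}.Subsingleton)
    (hne : ∀ τ, ∃ s, (K τ ∩ D s).Nonempty) :
    ∑ τ, Nat.card {s // (K τ ∩ D s).Nonempty} ≤ 3 * Nat.card S + Nat.card J := by
  have hDev : ∀ᶠ ε in 𝓝[>] 0, Pairwise (Function.onFun Disjoint fun s => pixelation ε (D s)) := by
    simp only [Pairwise, eventually_all]
    exact fun s t hst => eventually_disjoint_pixelation (hDcomp s) (hDcomp t).isClosed (hD hst)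
  have hKev : ∀ᶠ ε in 𝓝[>] 0, ∀ τ τ', τ ≠ τ' →
      pixelation ε (K τ) ∩ pixelation ε (K τ') ⊆ ⋃ s, pixelation ε (D s) := by
    simp only [← pixelation_iUnion, eventually_all]
    exact fun τ τ' h =>
      eventually_pixelation_inter_subset (hKcomp τ) (hKcomp τ').isClosed (hK τ τ' h)
  have hmeetev : ∀ᶠ ε in 𝓝[>] 0, ∀ τ s,
      (pixelation ε (K τ) ∩ pixelation ε (D s)).Nonempty ↔ (K τ ∩ D s).Nonempty := by
    simp only [eventually_all]
    exact fun τ s => eventually_nonempty_pixelation_inter_iff (hKcomp τ) (hDcomp s).isClosed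
  obtain ⟨ε, hDε, hKε, hmeet, hε⟩ :=
    (hDev.and (hKev.and (hmeetev.and eventually_mem_nhdsWithin))).exists
  simp only [← hmeet] at huniq hne ⊢
  exact sum_card_meeting_le hasAlgebraicDual_gridGraph
    (fun s => finite_pixelation hε (hDcomp s).isBounded)
    (fun τ => finite_pixelation hε (hKcomp τ).isBounded)
    (fun s => preconnected_induce_pixelation hε (hDconn s))
    (fun τ => preconnected_induce_pixelation hε (hKconn τ)) hDε hKε huniq hne

end Plane

section Fattening

open Filter Topology

variable {X : Type*} [TopologicalSpace X] [T2Space X] [LocallyCompactSpace X]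
  [LocallyConnectedSpace X] {V : Set X}

lemma exists_isCompact_isPreconnected_mem_nhds (hV : IsOpen V) {x : X} (hx : x ∈ V) :
    ∃ D, IsCompact D ∧ IsPreconnected D ∧ x ∈ interior D ∧ D ⊆ V := by
  obtain ⟨L, hL, hxL, hLV⟩ := exists_compact_subset hV hx
  obtain ⟨W, hWL, hW, hxW, hWconn⟩ := locallyConnectedSpace_iff_subsets_isOpen_isConnected.1
    ‹_› x _ (isOpen_interior.mem_nhds hxL)
  have hWL' : closure W ⊆ L := closure_minimal (hWL.trans interior_subset) hL.isClosed
  exact ⟨closure W, hL.of_isClosed_subset isClosed_closure hWL', hWconn.isPreconnected.closure,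
    interior_maximal subset_closure hW hxW, hWL'.trans hLV⟩

lemma exists_isCompact_isPreconnected_pair (hV : IsOpen V) (hconn : IsPreconnected V) {x y : X}
    (hx : x ∈ V) (hy : y ∈ V) :
    ∃ D, IsCompact D ∧ IsPreconnected D ∧ x ∈ interior D ∧ y ∈ interior D ∧ D ⊆ V := by
  refine hconn.induction₂ (fun x y => ∃ D, IsCompact D ∧ IsPreconnected D ∧ x ∈ interior D ∧
    y ∈ interior D ∧ D ⊆ V) (fun x hx => ?_) ?_ ?_ hx hy
  · obtain ⟨D, hD, hDconn, hxD, hDV⟩ := exists_isCompact_isPreconnected_mem_nhds hV hx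
    filter_upwards [mem_nhdsWithin_of_mem_nhds (isOpen_interior.mem_nhds hxD)] with y hy
    exact ⟨D, hD, hDconn, hxD, hy, hDV⟩
  · rintro x y z - - - ⟨D, hD, hDconn, hxD, hyD, hDV⟩ ⟨D', hD', hDconn', hyD', hzD', hDV'⟩
    exact ⟨D ∪ D', hD.union hD',
      hDconn.union y (interior_subset hyD) (interior_subset hyD') hDconn',
      interior_mono Set.subset_union_left hxD, interior_mono Set.subset_union_right hzD',
      Set.union_subset hDV hDV'⟩
  · rintro x y - - ⟨D, hD, hDconn, hxD, hyD, hDV⟩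
    exact ⟨D, hD, hDconn, hyD, hxD, hDV⟩

theorem exists_isCompact_isPreconnected_between {C : Set X} (hC : IsCompact C) (hV : IsOpen V)
    (hconn : IsPreconnected V) (hCV : C ⊆ V) :
    ∃ D, IsCompact D ∧ IsPreconnected D ∧ C ⊆ interior D ∧ D ⊆ V := by
  obtain rfl | ⟨b, hb⟩ := C.eq_empty_or_nonempty
  · exact ⟨∅, isCompact_empty, isPreconnected_empty, Set.empty_subset _, Set.empty_subset _⟩
  have hbV := hCV hb
  -- Keeping the base point `b` in `D` makes the union of two such sets preconnected.
  suffices h : ∃ D, IsCompact D ∧ IsPreconnected D ∧ b ∈ D ∧ C ⊆ interior D ∧ D ⊆ V by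
    obtain ⟨D, hD, hDconn, -, hCD, hDV⟩ := h
    exact ⟨D, hD, hDconn, hCD, hDV⟩
  refine hC.induction_on (p := fun C => ∃ D, IsCompact D ∧ IsPreconnected D ∧ b ∈ D ∧
    C ⊆ interior D ∧ D ⊆ V) ?_ ?_ ?_ fun x hx => ?_
  · exact ⟨{b}, isCompact_singleton, isPreconnected_singleton, rfl, Set.empty_subset _,
      Set.singleton_subset_iff.2 hbV⟩
  · rintro C C' hCC' ⟨D, hD, hDconn, hbD, hCD, hDV⟩
    exact ⟨D, hD, hDconn, hbD, hCC'.trans hCD, hDV⟩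
  · rintro C C' ⟨D, hD, hDconn, hbD, hCD, hDV⟩ ⟨D', hD', hDconn', hbD', hCD', hDV'⟩
    exact ⟨D ∪ D', hD.union hD', hDconn.union b hbD hbD' hDconn', .inl hbD,
      Set.union_subset (hCD.trans (interior_mono Set.subset_union_left))
        (hCD'.trans (interior_mono Set.subset_union_right)), Set.union_subset hDV hDV'⟩
  · obtain ⟨D, hD, hDconn, hbD, hxD, hDV⟩ :=
      exists_isCompact_isPreconnected_pair hV hconn hbV (hCV hx)
    exact ⟨interior D, mem_nhdsWithin_of_mem_nhds (isOpen_interior.mem_nhds hxD),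
      D, hD, hDconn, interior_subset hbD, subset_rfl, hDV⟩

end Fattening

section OpenSets

variable {J S : Type*} {O : S → Set (ℝ × ℝ)} {U : J → Set (ℝ × ℝ)}

lemma exists_isCompact_core [Finite J] {V : Set (ℝ × ℝ)} (hV : IsOpen V → IsPreconnected V)
    {p : ℝ × ℝ} (hp : p ∈ V) (hU : ∀ τ, IsOpen (U τ)) {K : J → Set (ℝ × ℝ)}
    (hK : ∀ τ, IsCompact (K τ)) (hKU : ∀ τ, K τ ⊆ U τ) :
    ∃ D, IsCompact D ∧ IsPreconnected D ∧ p ∈ D ∧ D ⊆ V ∧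
      ∀ τ τ', U τ ∩ U τ' = V → K τ ∩ K τ' ⊆ interior D := by
  by_cases hopen : IsOpen V
  · let C := ⋃ q : {q : J × J // U q.1 ∩ U q.2 = V}, K q.1.1 ∩ K q.1.2
    have hC : IsCompact C := isCompact_iUnion fun q => (hK q.1.1).inter (hK q.1.2)
    have hCV : C ⊆ V := Set.iUnion_subset fun q =>
      (Set.inter_subset_inter (hKU _) (hKU _)).trans q.2.subset
    obtain ⟨D, hD, hDconn, hCD, hDV⟩ := exists_isCompact_isPreconnected_between (hC.insert p) hopen
      (hV hopen) (Set.insert_subset hp hCV)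
    rw [Set.insert_subset_iff] at hCD
    exact ⟨D, hD, hDconn, interior_subset hCD.1, hDV, fun τ τ' h =>
      (Set.subset_iUnion_of_subset ⟨(τ, τ'), h⟩ subset_rfl).trans hCD.2⟩
  · exact ⟨{p}, isCompact_singleton, isPreconnected_singleton, rfl, Set.singleton_subset_iff.2 hp,
      fun τ τ' h => absurd (h ▸ (hU τ).inter (hU τ')) hopen⟩

lemma subsingleton_setOf_subset_and_subset (hO : ∀ s, (O s).Nonempty)
    (hdisj : Pairwise (Function.onFun Disjoint O)) {U U' : Set (ℝ × ℝ)}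
    (hUU' : Disjoint U U' ∨ ∃ s, U ∩ U' = O s) :
    {s | O s ⊆ U ∧ O s ⊆ U'}.Subsingleton := by
  have heq {s r : S} (hs : O s ⊆ O r) : s = r :=
    hdisj.eq fun h => (hO s).ne_empty (disjoint_self.1 (h.mono_right hs))
  rintro s ⟨hsU, hsU'⟩ t ⟨htU, htU'⟩
  obtain hUU' | ⟨r, hr⟩ := hUU'
  · exact absurd (disjoint_self.1 (hUU'.mono hsU hsU')) (hO s).ne_empty
  · exact (heq (hr ▸ Set.subset_inter hsU hsU')).trans (heq (hr ▸ Set.subset_inter htU htU')).symm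

theorem sum_card_subset_le_of_isOpen [Finite S] [Fintype J] (hO : ∀ s, (O s).Nonempty)
    (hOconn : ∀ s, IsOpen (O s) → IsPreconnected (O s))
    (hU : ∀ τ, IsOpen (U τ)) (hUconn : ∀ τ, IsPreconnected (U τ))
    (hdisj : Pairwise (Function.onFun Disjoint O))
    (hOU : ∀ τ s, O s ⊆ U τ ∨ Disjoint (U τ) (O s))
    (hUU : ∀ τ τ', τ ≠ τ' → Disjoint (U τ) (U τ') ∨ ∃ s, U τ ∩ U τ' = O s)
    (hne : ∀ τ, ∃ s, O s ⊆ U τ) :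
    ∑ τ, Nat.card {s // O s ⊆ U τ} ≤ 3 * Nat.card S + Nat.card J := by
  choose p hp using hO
  have hKexists (τ : J) := exists_isCompact_isPreconnected_between
    ((Set.finite_range p).inter_of_left (U τ)).isCompact (hU τ) (hUconn τ) Set.inter_subset_right
  choose K hK hKconn hpK hKU using hKexists
  have hDexists (s : S) := exists_isCompact_core (hOconn s) (hp s) hU hK hKU
  choose D hD hDconn hpD hDO hDinter using hDexists
  have hmeet (τ : J) (s : S) : (K τ ∩ D s).Nonempty ↔ O s ⊆ U τ := by
    refine ⟨fun h => (hOU τ s).resolve_right fun hdis => ?_, fun h => ?_⟩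
    · exact h.ne_empty (hdis.mono (hKU τ) (hDO s)).inter_eq
    · exact ⟨p s, interior_subset (hpK τ ⟨⟨s, rfl⟩, h (hp s)⟩), hpD s⟩
  simp only [← hmeet] at hne ⊢
  refine sum_card_meeting_le_of_isCompact hD hDconn hK hKconn
    (fun s t hst => (hdisj hst).mono (hDO s) (hDO t)) (fun τ τ' hττ' => ?_)
    (fun τ τ' hττ' => ?_) hne
  · obtain h | ⟨s, hs⟩ := hUU τ τ' hττ'
    · rw [(h.mono (hKU τ) (hKU τ')).inter_eq]
      exact Set.empty_subset _
    · exact (hDinter s τ τ' hs).trans (interior_mono (Set.subset_iUnion D s))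
  · simp only [hmeet]
    exact subsingleton_setOf_subset_and_subset (fun s => ⟨p s, hp s⟩) hdisj (hUU τ τ' hττ')

end OpenSets

section Counting

open Finset FinsetFamily

theorem card_mul_le_add_card_shadow {α : Type*} [DecidableEq α] {𝒜 : Finset (Finset α)} {r c : ℕ}
    (h𝒜 : (𝒜 : Set (Finset α)).Sized r)
    (hc : ∑ t ∈ ∂ 𝒜 with 2 ≤ #{s ∈ 𝒜 | t ⊆ s}, #{s ∈ 𝒜 | t ⊆ s} ≤
      c + #{t ∈ ∂ 𝒜 | 2 ≤ #{s ∈ 𝒜 | t ⊆ s}}) :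
    #𝒜 * r ≤ c + #(∂ 𝒜) := by
  have hfacets : ∀ s ∈ 𝒜, r ≤ #{t ∈ ∂ 𝒜 | t ⊆ s} := fun s hs => by
    rw [← h𝒜 hs, ← card_image_of_injOn s.erase_injOn]
    refine card_le_card fun t ht => ?_
    obtain ⟨a, ha, rfl⟩ := mem_image.1 ht
    exact mem_filter.2 ⟨erase_mem_shadow hs ha, erase_subset a s⟩
  have hfew : ∑ t ∈ ∂ 𝒜 with ¬ 2 ≤ #{s ∈ 𝒜 | t ⊆ s}, #{s ∈ 𝒜 | t ⊆ s} ≤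
      #{t ∈ ∂ 𝒜 | ¬ 2 ≤ #{s ∈ 𝒜 | t ⊆ s}} := by
    rw [card_eq_sum_ones]
    exact sum_le_sum fun t ht => by have := (mem_filter.1 ht).2; lia
  calc #𝒜 * r ≤ ∑ s ∈ 𝒜, #{t ∈ ∂ 𝒜 | t ⊆ s} := card_nsmul_le_sum _ _ _ hfacets
    _ = ∑ t ∈ ∂ 𝒜, #{s ∈ 𝒜 | t ⊆ s} := by
      simpa only [bipartiteAbove, bipartiteBelow] using
        (sum_card_bipartiteAbove_eq_sum_card_bipartiteBelow (s := ∂ 𝒜) (t := 𝒜) (· ⊆ ·)).symm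
    _ ≤ c + #{t ∈ ∂ 𝒜 | 2 ≤ #{s ∈ 𝒜 | t ⊆ s}} + #{t ∈ ∂ 𝒜 | ¬ 2 ≤ #{s ∈ 𝒜 | t ⊆ s}} := by
      rw [← sum_filter_add_sum_filter_not _ fun t => 2 ≤ #{s ∈ 𝒜 | t ⊆ s}]
      exact add_le_add hc hfew
    _ = c + #(∂ 𝒜) := by rw [add_assoc, card_filter_add_card_filter_not]

end Counting

section Nerve

open Finset FinsetFamily

variable {ι X : Type*}

lemma biInter_union_eq [DecidableEq ι] (A : ι → Set X) (σ τ : Finset ι) :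
    ⋂ i ∈ σ ∪ τ, A i = (⋂ i ∈ σ, A i) ∩ ⋂ i ∈ τ, A i := iInf_union

variable [Fintype ι] {A : ι → Set X} {r : ℕ} {σ τ : Finset ι}

open Classical in
/-- The faces with `r` vertices of the nerve of a family of sets. -/
noncomputable def nerveFaces (A : ι → Set X) (r : ℕ) : Finset (Finset ι) :=
  {σ | #σ = r ∧ (⋂ i ∈ σ, A i).Nonempty}

lemma mem_nerveFaces : σ ∈ nerveFaces A r ↔ #σ = r ∧ (⋂ i ∈ σ, A i).Nonempty := by
  simp [nerveFaces]

lemma biInter_eq_empty_of_nerveFaces_eq_empty (hr : nerveFaces A r = ∅) (hσ : r ≤ #σ) :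
    ⋂ i ∈ σ, A i = ∅ := by
  obtain ⟨ρ, hρσ, hρ⟩ := exists_subset_card_eq hσ
  by_contra hne
  have hρne := (Set.nonempty_iff_ne_empty.2 hne).mono (Set.biInter_subset_biInter_left hρσ)
  exact notMem_empty ρ (hr ▸ mem_nerveFaces.2 ⟨hρ, hρne⟩)

lemma disjoint_biInter_of_not_subset (hr : nerveFaces A (r + 1) = ∅) (hσ : #σ = r)
    (h : ¬ τ ⊆ σ) : Disjoint (⋂ i ∈ τ, A i) (⋂ i ∈ σ, A i) := by
  classical
  rw [Set.disjoint_iff_inter_eq_empty, ← biInter_union_eq]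
  refine biInter_eq_empty_of_nerveFaces_eq_empty hr (hσ ▸ card_lt_card ?_)
  exact ⟨subset_union_right, fun hle => h (union_subset_left hle)⟩

lemma disjoint_biInter_of_ne (hr : nerveFaces A (r + 1) = ∅) (hσ : #σ = r) (hτ : #τ = r)
    (hne : σ ≠ τ) : Disjoint (⋂ i ∈ σ, A i) (⋂ i ∈ τ, A i) :=
  disjoint_biInter_of_not_subset hr hτ fun h => hne (eq_of_subset_of_card_le h (by lia))

lemma biInter_subset_biInter_iff (hr : nerveFaces A (r + 1) = ∅) (hσ : σ ∈ nerveFaces A r) :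
    (⋂ i ∈ σ, A i) ⊆ ⋂ i ∈ τ, A i ↔ τ ⊆ σ := by
  obtain ⟨hcard, hne⟩ := mem_nerveFaces.1 hσ
  refine ⟨fun hle => not_not.1 fun h => hne.ne_empty ?_, Set.biInter_subset_biInter_left⟩
  exact disjoint_self.1 ((disjoint_biInter_of_not_subset hr hcard h).mono_left hle)

variable [DecidableEq ι]

lemma disjoint_biInter_or_union_mem_nerveFaces (hr : nerveFaces A (r + 2) = ∅) (hσ : #σ = r)
    (hτ : #τ = r) (hne : σ ≠ τ) :
    Disjoint (⋂ i ∈ σ, A i) (⋂ i ∈ τ, A i) ∨ σ ∪ τ ∈ nerveFaces A (r + 1) := by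
  rw [Set.disjoint_iff_inter_eq_empty, ← biInter_union_eq, or_iff_not_imp_left, mem_nerveFaces]
  intro hinter
  have hlt : #(σ ∪ τ) < r + 2 :=
    not_le.1 fun hle => hinter (biInter_eq_empty_of_nerveFaces_eq_empty hr hle)
  have hgt : #τ < #(σ ∪ τ) := card_lt_card ⟨subset_union_right, fun hle =>
    hne (eq_of_subset_of_card_le (union_subset_left hle) (by lia))⟩
  exact ⟨by lia, Set.nonempty_iff_ne_empty.2 hinter⟩

lemma not_subsingleton_biInter (hr : nerveFaces A (r + 1) = ∅)
    (hτ : 2 ≤ #{σ ∈ nerveFaces A r | τ ⊆ σ}) : ¬ (⋂ i ∈ τ, A i).Subsingleton := by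
  obtain ⟨σ, hσ, σ', hσ', hne⟩ := one_lt_card.1 hτ
  simp only [mem_filter, mem_nerveFaces] at hσ hσ'
  obtain ⟨⟨hσ, x, hx⟩, hτσ⟩ := hσ
  obtain ⟨⟨hσ', y, hy⟩, hτσ'⟩ := hσ'
  refine fun hsub => Set.disjoint_left.1 (disjoint_biInter_of_ne hr hσ hσ' hne) hx ?_
  exact hsub (Set.biInter_subset_biInter_left hτσ' hy) (Set.biInter_subset_biInter_left hτσ hx) ▸ hy

theorem card_nerveFaces_mul_le {A : ι → Set (ℝ × ℝ)} (hr : nerveFaces A (r + 2) = ∅)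
    (hA : ∀ σ : Finset ι, #σ = r → (⋂ i ∈ σ, A i).Subsingleton ∨
      IsOpen (⋂ i ∈ σ, A i) ∧ IsPreconnected (⋂ i ∈ σ, A i))
    (hA' : ∀ σ : Finset ι, #σ = r + 1 → IsOpen (⋂ i ∈ σ, A i) → IsPreconnected (⋂ i ∈ σ, A i)) :
    #(nerveFaces A (r + 1)) * (r + 1) ≤
      3 * #(nerveFaces A (r + 1)) + #(∂ (nerveFaces A (r + 1))) := by
  set 𝒮 := nerveFaces A (r + 1)
  have hsized : (𝒮 : Set (Finset ι)).Sized (r + 1) := fun σ hσ => (mem_nerveFaces.1 hσ).1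
  refine card_mul_le_add_card_shadow hsized ?_
  set 𝒥 : Finset (Finset ι) := {τ ∈ ∂ 𝒮 | 2 ≤ #{σ ∈ 𝒮 | τ ⊆ σ}}
  have hcard (τ : 𝒥) : #(τ : Finset ι) = r := hsized.shadow (mem_filter.1 τ.2).1
  have htwo (τ : 𝒥) : 2 ≤ #{σ ∈ 𝒮 | τ.1 ⊆ σ} := (mem_filter.1 τ.2).2
  have hU (τ : 𝒥) := (hA τ (hcard τ)).resolve_left (not_subsingleton_biInter hr (htwo τ))
  have hinc (τ : 𝒥) (σ : 𝒮) : (⋂ i ∈ σ.1, A i) ⊆ ⋂ i ∈ τ.1, A i ↔ τ.1 ⊆ σ.1 :=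
    biInter_subset_biInter_iff hr σ.2
  have hcount (τ : 𝒥) : Nat.card {σ : 𝒮 // (⋂ i ∈ σ.1, A i) ⊆ ⋂ i ∈ τ.1, A i} =
      #{σ ∈ 𝒮 | τ.1 ⊆ σ} := by
    simp only [hinc, Nat.card_eq_fintype_card, Fintype.card_subtype, univ_eq_attach, filter_attach,
      card_map, card_attach]
  have hsum := sum_card_subset_le_of_isOpen (O := fun σ : 𝒮 => ⋂ i ∈ σ.1, A i)
    (U := fun τ : 𝒥 => ⋂ i ∈ τ.1, A i) (fun σ => (mem_nerveFaces.1 σ.2).2)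
    (fun σ => hA' σ (hsized σ.2)) (fun τ => (hU τ).1) (fun τ => (hU τ).2)
    (fun σ σ' hne => disjoint_biInter_of_ne hr (hsized σ.2) (hsized σ'.2)
      (Subtype.coe_injective.ne hne))
    (fun τ σ => (em (τ.1 ⊆ σ.1)).imp (hinc τ σ).2 (disjoint_biInter_of_not_subset hr (hsized σ.2)))
    (fun τ τ' hne => (disjoint_biInter_or_union_mem_nerveFaces hr (hcard τ) (hcard τ')
      (Subtype.coe_injective.ne hne)).imp_right fun h => ⟨⟨_, h⟩, (biInter_union_eq A _ _).symm⟩)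
    (fun τ => ?_)
  · simpa only [hcount, Nat.card_eq_fintype_card, Fintype.card_coe,
      sum_coe_sort 𝒥 fun τ => #{σ ∈ 𝒮 | τ ⊆ σ}] using hsum
  · obtain ⟨σ, hσ⟩ := card_pos.1 (two_pos.trans_le (htwo τ))
    obtain ⟨hσ, hτσ⟩ := mem_filter.1 hσ
    exact ⟨⟨σ, hσ⟩, (hinc τ ⟨σ, hσ⟩).2 hτσ⟩

end Nerve

section FaceNumbers

open Finset FinsetFamily

variable {n : ℕ} {X Y : Type*} (A : Fin n → Set X)

lemma fNum_eq_card_nerveFaces (k : ℕ) : fNum A k = #(nerveFaces A (k + 1)) :=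
  Nat.subtype_card _ fun _ => mem_nerveFaces

lemma fInd_eq_card_shadow (k : ℕ) : fInd A k = #(∂ (nerveFaces A (k + 2))) := by
  refine Nat.subtype_card _ fun τ => ?_
  simp only [mem_shadow_iff_exists_mem_card_add_one, mem_nerveFaces]
  constructor
  · rintro ⟨σ, ⟨hσ, hne⟩, hτσ, hcard⟩
    refine ⟨by lia, hne.mono (Set.biInter_subset_biInter_left hτσ), σ, ?_, hσ, hne⟩
    exact ssubset_of_subset_of_ne hτσ fun h => by rw [h] at hcard; lia
  · rintro ⟨hτ, -, σ, hτσ, hσ, hne⟩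
    exact ⟨σ, ⟨hσ, hne⟩, hτσ.subset, by lia⟩

lemma nerveFaces_preimage {f : Y → X} (hf : f.Surjective) (r : ℕ) :
    nerveFaces (fun i => f ⁻¹' A i) r = nerveFaces A r := by
  ext σ
  simp only [mem_nerveFaces, ← Set.preimage_iInter₂, hf.nonempty_preimage]

end FaceNumbers

section Bound

open Finset FinsetFamily

theorem planar_upper_bound_path_connected_weak_general {X : Type*} [TopologicalSpace X]
    (φ : X ≃ₜ ℝ × ℝ) (k n : ℕ) (hk : 3 ≤ k) (A : Fin n → Set X) (h1 : fNum A (k + 1) = 0)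
    (h2 : ∀ σ : Finset (Fin n), #σ = k → (⋂ i ∈ σ, A i).Subsingleton ∨
      IsOpen (⋂ i ∈ σ, A i) ∧ IsPreconnected (⋂ i ∈ σ, A i))
    (h3 : ∀ σ : Finset (Fin n), #σ = k + 1 → IsOpen (⋂ i ∈ σ, A i) →
      IsPreconnected (⋂ i ∈ σ, A i)) :
    (fNum A k : ℝ) ≤ (1 / ((k : ℝ) - 2)) * fInd A (k - 1) := by
  have hfaces := nerveFaces_preimage A φ.symm.surjective
  have hnone : nerveFaces A (k + 2) = ∅ := by rwa [fNum_eq_card_nerveFaces, card_eq_zero] at h1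
  have hbound := card_nerveFaces_mul_le (A := fun i => φ.symm ⁻¹' A i) (r := k)
    ((hfaces _).trans hnone)
    (fun σ hσ => by
      simp only [← Set.preimage_iInter₂, φ.symm.isOpen_preimage, φ.symm.isPreconnected_preimage]
      exact (h2 σ hσ).imp_left (·.preimage φ.symm.injective))
    (by simpa only [← Set.preimage_iInter₂, φ.symm.isOpen_preimage,
      φ.symm.isPreconnected_preimage] using h3)
  have hnat : fNum A k * (k + 1) ≤ 3 * fNum A k + fInd A (k - 1) := by
    rw [fNum_eq_card_nerveFaces, fInd_eq_card_shadow, show k - 1 + 2 = k + 1 by lia]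
    simpa only [hfaces] using hbound
  have hreal : (fNum A k : ℝ) * (k + 1) ≤ 3 * fNum A k + fInd A (k - 1) := mod_cast hnat
  have hpos : (0 : ℝ) < k - 2 := by linarith [show (3 : ℝ) ≤ k from mod_cast hk]
  rw [one_div, ← div_eq_inv_mul, le_div_iff₀ hpos]
  linarith

end Bound

/-- **Theorem (weak bound for k ≥ 3).** Let `k ≥ 3` and let `𝒜 = {A_1, …, A_n}` be
subsets of `ℝ²` such that (i) `f_{k+1}(𝒜) = 0` and (ii) each `k`-wise and `(k+1)`-wise
intersection is empty, a single point, or both open and path-connected. Then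
`f_k(𝒜) ≤ (1/(k-2)) · f_{k-1}^{ind}(𝒜)`. -/
theorem planar_upper_bound_path_connected_weak (k n : ℕ) (hk : 3 ≤ k)
    (A : Fin n → Set (EuclideanSpace ℝ (Fin 2)))
    (h1 : fNum A (k + 1) = 0)
    (h2 : ∀ σ : Finset (Fin n), σ.card = k ∨ σ.card = k + 1 →
      (⋂ i ∈ σ, A i) = ∅ ∨ (∃ p, (⋂ i ∈ σ, A i) = {p}) ∨
        (IsOpen (⋂ i ∈ σ, A i) ∧ IsPathConnected (⋂ i ∈ σ, A i))) :
    (fNum A k : ℝ) ≤ (1 / ((k : ℝ) - 2)) * fInd A (k - 1) := by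
  have hsub {σ : Finset (Fin n)} (hσ : σ.card = k ∨ σ.card = k + 1) :
      (⋂ i ∈ σ, A i).Subsingleton ∨ IsOpen (⋂ i ∈ σ, A i) ∧ IsPreconnected (⋂ i ∈ σ, A i) := by
    rw [Set.subsingleton_iff_eq_empty_or_singleton, or_assoc]
    exact (h2 σ hσ).imp_right (.imp_right (.imp_right fun h => h.isConnected.isPreconnected))
  exact planar_upper_bound_path_connected_weak_general
    ((EuclideanSpace.equiv (Fin 2) ℝ).toHomeomorph.trans Homeomorph.finTwoArrow) k n hk A h1
    (fun _ hσ => hsub (.inl hσ))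
    (fun _ hσ _ => (hsub (.inr hσ)).elim Set.Subsingleton.isPreconnected And.right)
end

section
/- Let ℒ be a simple arrangement of n ≥ 4 lines in the real projective plane ℝP², i.e., n pairwise distinct projective lines such that no point of ℝP² lies on three of them. Then the number of triangles of ℒ (two-dimensional cells of the cell decomposition of ℝP² induced by ℒ whose boundary meets exactly three of the lines) is at most n(n−1)/3. Consequently, some line of ℒ is incident to at most n−1 triangles of ℒ. -/
/-- The quotient topology on the real projective plane
`ℝP² = Projectivization ℝ (Fin 3 → ℝ)` (the quotient of `ℝ³ ∖ {0}` by scaling). -/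
noncomputable instance : TopologicalSpace (Projectivization ℝ (Fin 3 → ℝ)) :=
  inferInstanceAs (TopologicalSpace (Quotient (projectivizationSetoid ℝ (Fin 3 → ℝ))))

/-- The projective line in `ℝP²` determined by a two-dimensional linear subspace `W`
of `ℝ³`: the set of points whose representing line lies in `W`. -/
def projLine (W : Submodule ℝ (Fin 3 → ℝ)) : Set (Projectivization ℝ (Fin 3 → ℝ)) :=
  {x | x.submodule ≤ W}

/-- The two-dimensional cells of the arrangement of the lines `projLine (W i)`: the
connected components of the complement of the union of the lines. -/
def IsArrCell {n : ℕ} (W : Fin n → Submodule ℝ (Fin 3 → ℝ))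
    (C : Set (Projectivization ℝ (Fin 3 → ℝ))) : Prop :=
  ∃ x ∈ (⋃ i, projLine (W i))ᶜ, C = connectedComponentIn (⋃ i, projLine (W i))ᶜ x

/-- A triangle of the arrangement: a two-dimensional cell whose closure meets exactly
three of the lines. -/
def IsArrTriangle {n : ℕ} (W : Fin n → Submodule ℝ (Fin 3 → ℝ))
    (C : Set (Projectivization ℝ (Fin 3 → ℝ))) : Prop :=
  IsArrCell W C ∧ Nat.card {i : Fin n // (closure C ∩ projLine (W i)).Nonempty} = 3

/-!
Two lines of the arrangement cross at a single vertex, so it suffices to show that each vertex is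
a corner of at most two triangles: counting corners then gives `3 T ≤ 2 * n.choose 2`, and
averaging over the lines gives one that is incident to fewer than `n` triangles.

If two triangles at a vertex lay in adjacent sectors, they would share an edge. Both would then
have the same three walls, since the other end of that edge belongs to both closures, and hence
the same apex opposite to the edge. But the segments joining a point of the edge to the apex
inside the two triangles form a full projective line, which a fourth line of the arrangement has
to cross although it meets neither closed triangle. So triangles at a vertex lie in opposite
sectors, and there is room for two only.

Cells are handled through the convex cones in `ℝ³` above them, where sides of a line become signs
of a linear functional.
-/

namespace LineArrangement

open Module
open scoped LinearAlgebra.Projectivization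

section Counting

variable {α β : Type*} [Finite α] [Finite β]

theorem card_mul_le_of_ncard_pair_le (m : α → Set β) {k d : ℕ}
    (hm : ∀ a, k ≤ (m a).ncard)
    (hd : ∀ b c, b ≠ c → {a | b ∈ m a ∧ c ∈ m a}.ncard ≤ d) :
    Nat.card α * (k * (k - 1)) ≤ Nat.card β * (Nat.card β - 1) * d := by
  classical
  have := Fintype.ofFinite α
  have := Fintype.ofFinite β
  have hpairs (a : α) : k * (k - 1) ≤ (m a).toFinset.offDiag.card := by
    rw [Finset.offDiag_card, ← Nat.mul_sub_one, ← Set.ncard_eq_toFinset_card']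
    exact Nat.mul_le_mul (hm a) (Nat.sub_le_sub_right (hm a) 1)
  have hcodegree (p : β × β) (hp : p ∈ (Finset.univ : Finset β).offDiag) :
      (Finset.univ.bipartiteBelow (fun a p ↦ p ∈ (m a).toFinset.offDiag) p).card ≤ d := by
    have hne : p.1 ≠ p.2 := (Finset.mem_offDiag.1 hp).2.2
    refine le_trans (le_of_eq ?_) (hd p.1 p.2 hne)
    simp [Set.ncard_eq_toFinset_card', Finset.bipartiteBelow, hne]
  have hcount := Finset.card_mul_le_card_mul (s := Finset.univ) (t := Finset.univ.offDiag)
    (fun a p ↦ p ∈ (m a).toFinset.offDiag)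
    (fun a _ ↦ (hpairs a).trans (Finset.card_le_card fun p hp ↦ by
      simp_all [Finset.bipartiteAbove])) hcodegree
  rwa [Finset.offDiag_card, ← Nat.mul_sub_one, Finset.card_univ, Finset.card_univ,
    ← Nat.card_eq_fintype_card, ← Nat.card_eq_fintype_card] at hcount

theorem exists_ncard_mem_lt (m : α → Set β) {k d : ℕ} (hm : ∀ a, (m a).ncard ≤ k)
    (hlt : Nat.card α * k < Nat.card β * d) : ∃ b, {a | b ∈ m a}.ncard < d := by
  classical
  have := Fintype.ofFinite α
  have := Fintype.ofFinite β
  by_contra! hge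
  have hcount := Finset.card_mul_le_card_mul' (s := Finset.univ) (t := Finset.univ)
    (fun a b ↦ b ∈ m a) (m := k) (n := d)
    (fun b _ ↦ (hge b).trans_eq (by simp [Set.ncard_eq_toFinset_card', Finset.bipartiteBelow]))
    (fun a _ ↦ (hm a).trans_eq' (by
      simp only [Set.ncard_eq_toFinset_card', Finset.bipartiteAbove]; congr; ext; simp))
  rw [Finset.card_univ, Finset.card_univ,
    ← Nat.card_eq_fintype_card, ← Nat.card_eq_fintype_card] at hcount
  exact hlt.not_ge hcount

end Counting

section Cones

theorem exists_ne_zero_apply_eq_zero {K V : Type*} [Field K] [AddCommGroup V] [Module K V]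
    (hV : 2 < finrank K V) (g g' : Dual K V) : ∃ p ≠ 0, g p = 0 ∧ g' p = 0 := by
  have : FiniteDimensional K V := FiniteDimensional.of_finrank_pos (by lia)
  have hker : (g.prod g').ker ≠ ⊥ := LinearMap.ker_ne_bot_of_finrank_lt (by simpa)
  obtain ⟨p, hp, hp0⟩ := (Submodule.ne_bot_iff _).1 hker
  exact ⟨p, hp0, Prod.ext_iff.1 hp⟩

variable {K V ι : Type*} [Field K] [LinearOrder K] [IsStrictOrderedRing K]
  [AddCommGroup V] [Module K V] {f : ι → Dual K V} {v v' w p : V} {a b c i j : ι}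

theorem mul_pos_trans {x y z : K} (hxy : 0 < x * y) (hyz : 0 < y * z) : 0 < x * z := by
  rcases mul_pos_iff.1 hxy with ⟨hx, hy⟩ | ⟨hx, hy⟩
  · exact mul_pos hx (pos_of_mul_pos_right hyz hy.le)
  · exact mul_pos_of_neg_of_neg hx (neg_of_mul_pos_right hyz hy.le)

/-- The open cone over a cell: the vectors separated from `v` by none of the hyperplanes
`f j = 0`. It is empty when `v` lies on one of them. -/
def openCone (f : ι → Dual K V) (v : V) : ConvexCone K V where
  carrier := {w | ∀ j, 0 < f j v * f j w}
  smul_mem' c hc w hw j := by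
    simpa only [map_smul, smul_eq_mul, mul_left_comm] using mul_pos hc (hw j)
  add_mem' w hw w' hw' j := by
    simpa only [map_add, mul_add] using add_pos (hw j) (hw' j)

/-- The closed cone over a cell: the vectors not strictly separated from `v` by any of the
hyperplanes `f j = 0`. -/
def closedCone (f : ι → Dual K V) (v : V) : ConvexCone K V where
  carrier := {w | ∀ j, 0 ≤ f j v * f j w}
  smul_mem' c hc w hw j := by
    simpa only [map_smul, smul_eq_mul, mul_left_comm] using mul_nonneg hc.le (hw j)
  add_mem' w hw w' hw' j := by
    simpa only [map_add, mul_add] using add_nonneg (hw j) (hw' j)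

/-- The indices of the hyperplanes that the closed cone of `v` meets outside the origin. In the
projective plane these are the lines met by the closure of the cell of `v`. -/
def walls (f : ι → Dual K V) (v : V) : Set ι :=
  {i | ∃ w ∈ closedCone f v, w ≠ 0 ∧ f i w = 0}

theorem mem_openCone : w ∈ openCone f v ↔ ∀ j, 0 < f j v * f j w := Iff.rfl

theorem mem_closedCone : w ∈ closedCone f v ↔ ∀ j, 0 ≤ f j v * f j w := Iff.rfl

theorem mem_openCone_neg : w ∈ openCone f (-v) ↔ -w ∈ openCone f v := by
  simp only [mem_openCone, map_neg, neg_mul, mul_neg]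

theorem mem_closedCone_neg : w ∈ closedCone f (-v) ↔ -w ∈ closedCone f v := by
  simp only [mem_closedCone, map_neg, neg_mul, mul_neg]

theorem walls_neg : walls f (-v) = walls f v := by
  ext i
  refine (Equiv.neg V).exists_congr fun w ↦ ?_
  simp only [mem_closedCone_neg, Equiv.neg_apply, map_neg, neg_ne_zero, neg_eq_zero]

theorem zero_notMem_openCone [Nonempty ι] : (0 : V) ∉ openCone f v := fun h ↦
  (h (Classical.arbitrary ι)).ne' (by rw [map_zero, mul_zero])

theorem self_mem_openCone (hv : ∀ i, f i v ≠ 0) : v ∈ openCone f v :=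
  fun i ↦ mul_self_pos.2 (hv i)

theorem ne_zero_of_mem_openCone (hw : w ∈ openCone f v) (i : ι) : f i w ≠ 0 :=
  right_ne_zero_of_mul (hw i).ne'

theorem openCone_le_closedCone : openCone f v ≤ closedCone f v := fun _ hw j ↦ (hw j).le

theorem openCone_eq_of_mem (h : v' ∈ openCone f v) : openCone f v' = openCone f v := by
  ext w
  exact ⟨fun hw j ↦ mul_pos_trans (h j) (hw j),
    fun hw j ↦ mul_pos_trans (by rw [mul_comm]; exact h j) (hw j)⟩

theorem add_mem_openCone (hw : w ∈ closedCone f v) (hv' : v' ∈ openCone f v) :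
    w + v' ∈ openCone f v := fun j ↦ by
  simpa only [map_add, mul_add] using add_pos_of_nonneg_of_pos (hw j) (hv' j)

theorem finite_range_openCone [Finite ι] (f : ι → Dual K V) : (Set.range (openCone f)).Finite := by
  have hfactor : Function.FactorsThrough (openCone f) fun v j ↦ SignType.sign (f j v) := by
    intro v v' h
    ext w
    refine forall_congr' fun j ↦ ?_
    have hsign : SignType.sign (f j v) = SignType.sign (f j v') := congrFun h j
    rw [← sign_eq_one_iff, ← sign_eq_one_iff, sign_mul, sign_mul, hsign]
  refine (Set.finite_range (Function.extend (fun v j ↦ SignType.sign (f j v)) (openCone f)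
    fun _ ↦ ⊥)).subset ?_
  rintro _ ⟨v, rfl⟩
  exact ⟨_, hfactor.extend_apply _ v⟩

theorem mul_pos_of_notMem_walls [Finite ι] (hv : ∀ i, f i v ≠ 0) (ha : a ∈ walls f v)
    (hw : w ≠ 0) (hwalls : ∀ i ∈ walls f v, 0 ≤ f i v * f i w) (hj : j ∉ walls f v) :
    0 < f j v * f j w := by
  by_contra! hneg
  have hsq (i : ι) : 0 < f i v ^ 2 := sq_pos_of_ne_zero (hv i)
  obtain ⟨k, hk, hmax⟩ := Set.exists_max_image (walls f v)ᶜ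
    (fun i ↦ -(f i v * f i w) / f i v ^ 2) (Set.toFinite _) ⟨j, hj⟩
  set s := -(f k v * f k w) / f k v ^ 2 with hs
  have hs0 : 0 ≤ s := (div_nonneg (neg_nonneg.2 hneg) (hsq j).le).trans (hmax j hj)
  have hmul (i : ι) : f i v * f i (w + s • v) = f i v * f i w + s * f i v ^ 2 := by
    rw [map_add, map_smul, smul_eq_mul]; ring
  refine hk ⟨w + s • v, fun i ↦ ?_, fun h0 ↦ ?_, ?_⟩
  · rw [hmul]
    by_cases hi : i ∈ walls f v
    · exact add_nonneg (hwalls i hi) (mul_nonneg hs0 (hsq i).le)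
    · linarith [(div_le_iff₀ (hsq i)).1 (hmax i hi)]
  · have hzero := hmul a
    rw [h0, map_zero, mul_zero] at hzero
    have hs' : s = 0 := by nlinarith [hsq a, hwalls a ha]
    exact hw (by simpa only [hs', zero_smul, add_zero] using h0)
  · refine (mul_eq_zero_iff_left (hv k)).1 ?_
    rw [hmul, hs, div_mul_cancel₀ _ (hsq k).ne', add_neg_cancel]

/-- General position: no nonzero vector lies on three of the hyperplanes `f i = 0`. -/
def InGeneralPosition (f : ι → Dual K V) : Prop :=
  ∀ ⦃i j l⦄, i ≠ j → i ≠ l → j ≠ l → ∀ ⦃v⦄, f i v = 0 → f j v = 0 → f l v = 0 → v = 0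

/-- The cell of `v` is triangular: `v` is on none of the hyperplanes, and exactly three of them
are walls. -/
structure IsTriangular (f : ι → Dual K V) (v : V) : Prop where
  apply_ne_zero : ∀ i, f i v ≠ 0
  ncard_walls : (walls f v).ncard = 3

namespace IsTriangular

theorem neg (h : IsTriangular f v) : IsTriangular f (-v) where
  apply_ne_zero i := by simpa only [map_neg, neg_ne_zero] using h.apply_ne_zero i
  ncard_walls := by rw [walls_neg, h.ncard_walls]

theorem exists_walls_eq (h : IsTriangular f v) (hb : b ∈ walls f v) (hc : c ∈ walls f v)
    (hbc : b ≠ c) : ∃ a, a ≠ b ∧ a ≠ c ∧ walls f v = {a, b, c} := by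
  have hsub : {b, c} ⊆ walls f v := Set.pair_subset hb hc
  obtain ⟨a, ha⟩ : ∃ a, walls f v \ {b, c} = {a} := by
    rw [← Set.ncard_eq_one, Set.ncard_sdiff hsub, h.ncard_walls, Set.ncard_pair hbc]
  have hmem : a ∈ walls f v \ {b, c} := ha ▸ Set.mem_singleton a
  exact ⟨a, fun hab ↦ hmem.2 (Or.inl hab), fun hac ↦ hmem.2 (Or.inr hac),
    by rw [← Set.sdiff_union_of_subset hsub, ha, Set.singleton_union]⟩

/-- No line passes through the interior of a triangle, so the other lines do not separate it from
its vertex, up to the sign of the vector representing the vertex. -/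
theorem same_side_or_opposite [Finite ι] (h : IsTriangular f v) (hf : InGeneralPosition f)
    (hb : b ∈ walls f v) (hc : c ∈ walls f v) (hbc : b ≠ c) (hp : p ≠ 0) (hpb : f b p = 0)
    (hpc : f c p = 0) :
    (∀ j, j ≠ b → j ≠ c → 0 < f j v * f j p) ∨ ∀ j, j ≠ b → j ≠ c → f j v * f j p < 0 := by
  obtain ⟨a, hab, hac, hwalls⟩ := h.exists_walls_eq hb hc hbc
  have same_side {q : V} (hqb : f b q = 0) (hqc : f c q = 0) (hqa : 0 < f a v * f a q) (j : ι)
      (hjb : j ≠ b) (hjc : j ≠ c) : 0 < f j v * f j q := by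
    rcases eq_or_ne j a with rfl | hja
    · exact hqa
    refine mul_pos_of_notMem_walls h.apply_ne_zero hb (fun hq ↦ ?_) ?_ ?_
    · simp [hq] at hqa
    · simp [hwalls, hqb, hqc, hqa.le]
    · simp [hwalls, hja, hjb, hjc]
  have hpa : f a p ≠ 0 := fun hpa ↦ hp (hf hab hac hbc hpa hpb hpc)
  rcases (mul_ne_zero (h.apply_ne_zero a) hpa).lt_or_gt with hneg | hpos
  · refine Or.inr fun j hjb hjc ↦ ?_
    have hj := same_side (q := -p) (by simpa) (by simpa) (by simpa) j hjb hjc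
    simpa using hj
  · exact Or.inl (same_side hpb hpc hpos)

theorem exists_vertex [Finite ι] (h : IsTriangular f v) (hf : InGeneralPosition f)
    (hV : 2 < finrank K V) (hb : b ∈ walls f v) (hc : c ∈ walls f v) (hbc : b ≠ c) :
    ∃ p ≠ 0, f b p = 0 ∧ f c p = 0 ∧ ∀ j, j ≠ b → j ≠ c → 0 < f j v * f j p := by
  obtain ⟨p, hp, hpb, hpc⟩ := exists_ne_zero_apply_eq_zero hV (f b) (f c)
  rcases h.same_side_or_opposite hf hb hc hbc hp hpb hpc with hside | hside
  · exact ⟨p, hp, hpb, hpc, hside⟩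
  · exact ⟨-p, by simpa, by simpa, by simpa, by simpa⟩

theorem exists_notMem_walls (h : IsTriangular f v) (hcard : 3 < Nat.card ι) :
    ∃ j, j ∉ walls f v := by
  by_contra! hall
  have hncard := h.ncard_walls
  rw [Set.eq_univ_of_forall hall, Set.ncard_univ] at hncard
  exact hcard.ne' hncard

theorem walls_eq_of_forall_ne [Finite ι] (h : IsTriangular f v) (h' : IsTriangular f v')
    (hf : InGeneralPosition f) (hV : 2 < finrank K V) (hb : b ∈ walls f v) (hc : c ∈ walls f v)
    (hb' : b ∈ walls f v') (hc' : c ∈ walls f v') (hbc : b ≠ c)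
    (hside : ∀ j, j ≠ c → 0 < f j v * f j v') : walls f v = walls f v' := by
  obtain ⟨a, -, hac, hwalls⟩ := h.exists_walls_eq hb hc hbc
  have ha : a ∈ walls f v := by simp [hwalls]
  -- The second vertex of the first triangle on `c` lies in the closure of the second triangle.
  obtain ⟨p, hp, hpa, hpc, hpv⟩ := h.exists_vertex hf hV ha hc hac
  have hpv' : p ∈ closedCone f v' := by
    intro j
    rcases eq_or_ne j a with rfl | hja
    · simp [hpa]
    rcases eq_or_ne j c with rfl | hjc
    · simp [hpc]
    exact (mul_pos_trans (by rw [mul_comm]; exact hside j hjc) (hpv j hja hjc)).le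
  have ha' : a ∈ walls f v' := ⟨p, hpv', hp, hpa⟩
  refine Set.eq_of_subset_of_ncard_le ?_ (h'.ncard_walls.trans h.ncard_walls.symm).le
  rw [hwalls]
  exact Set.insert_subset ha' (Set.pair_subset hb' hc')

theorem mem_openCone_of_forall_ne [Finite ι] (hcard : 3 < Nat.card ι) (h : IsTriangular f v)
    (h' : IsTriangular f v') (hf : InGeneralPosition f) (hV : 2 < finrank K V)
    (hb : b ∈ walls f v) (hc : c ∈ walls f v) (hb' : b ∈ walls f v') (hc' : c ∈ walls f v')
    (hbc : b ≠ c) (hside : ∀ j, j ≠ c → 0 < f j v * f j v') : v' ∈ openCone f v := by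
  obtain ⟨a, hab, hac, hwalls⟩ := h.exists_walls_eq hb hc hbc
  obtain ⟨j, hj⟩ := h.exists_notMem_walls hcard
  simp only [hwalls, Set.mem_insert_iff, Set.mem_singleton_iff, not_or] at hj
  obtain ⟨hja, hjb, hjc⟩ := hj
  have ha : a ∈ walls f v := by simp [hwalls]
  have ha' : a ∈ walls f v' := h.walls_eq_of_forall_ne h' hf hV hb hc hb' hc' hbc hside ▸ ha
  -- The apex `a ∩ b` and a fourth line `j` would be separated differently by two triangles lying
  -- on both sides of `c`.
  obtain ⟨q, hq, hqa, hqb, hqv⟩ := h.exists_vertex hf hV ha hb hab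
  rcases h'.same_side_or_opposite hf ha' hb' hab hq hqa hqb with hqv' | hqv'
  · intro i
    rcases eq_or_ne i c with rfl | hic
    · exact mul_pos_trans (hqv i hac.symm hbc.symm)
        (by rw [mul_comm]; exact hqv' i hac.symm hbc.symm)
    · exact hside i hic
  · have hjq : 0 < f j v' * f j q :=
      mul_pos_trans (by rw [mul_comm]; exact hside j hjc) (hqv j hja hjb)
    exact absurd hjq (hqv' j hja hjb).not_gt

end IsTriangular

/-- The cell of `v` is a triangle with walls `b` and `c`, and `v` is the representative, out of
`v` and `-v`, on the same side as `p` of the remaining hyperplanes; `p` is meant to span the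
vertex on `b` and `c`. -/
structure IsTriangleAt (f : ι → Dual K V) (b c : ι) (p v : V) : Prop extends IsTriangular f v where
  left_mem_walls : b ∈ walls f v
  right_mem_walls : c ∈ walls f v
  same_side : ∀ j, j ≠ b → j ≠ c → 0 < f j v * f j p

theorem IsTriangular.isTriangleAt_or_neg [Finite ι] (h : IsTriangular f v)
    (hf : InGeneralPosition f) (hb : b ∈ walls f v) (hc : c ∈ walls f v) (hbc : b ≠ c)
    (hp : p ≠ 0) (hpb : f b p = 0) (hpc : f c p = 0) :
    IsTriangleAt f b c p v ∨ IsTriangleAt f b c p (-v) :=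
  (h.same_side_or_opposite hf hb hc hbc hp hpb hpc).imp
    (fun hside ↦ ⟨h, hb, hc, hside⟩)
    (fun hside ↦ ⟨h.neg, by rwa [walls_neg], by rwa [walls_neg], by simpa⟩)

theorem IsTriangleAt.mul_neg_of_notMem_openCone [Finite ι] (hcard : 3 < Nat.card ι)
    (hV : 2 < finrank K V) (hf : InGeneralPosition f) (hbc : b ≠ c)
    (h : IsTriangleAt f b c p v) (h' : IsTriangleAt f b c p v') (hvv' : v' ∉ openCone f v) :
    f b v * f b v' < 0 := by
  refine (mul_ne_zero (h.apply_ne_zero b) (h'.apply_ne_zero b)).lt_of_le ?_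
  by_contra! hpos
  refine hvv' (h.mem_openCone_of_forall_ne hcard h'.toIsTriangular hf hV h.left_mem_walls
    h.right_mem_walls h'.left_mem_walls h'.right_mem_walls hbc fun j hjc ↦ ?_)
  rcases eq_or_ne j b with rfl | hjb
  · exact hpos
  · exact mul_pos_trans (h.same_side j hjb hjc) (by rw [mul_comm]; exact h'.same_side j hjb hjc)

end Cones

section Projectivization

variable {K V : Type*} [Field K] [AddCommGroup V] [Module K V]

/-- The points of projective space spanned by the nonzero vectors of `s`. -/
def projImage (s : Set V) : Set (ℙ K V) :=
  Projectivization.mk' K '' (Subtype.val ⁻¹' s)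

theorem mk_mem_projImage {s : Set V} {w : V} (hw : w ≠ 0) :
    Projectivization.mk K w hw ∈ projImage s ↔ ∃ t : Kˣ, t • w ∈ s := by
  constructor
  · rintro ⟨⟨u, hu⟩, hus, huw⟩
    obtain ⟨t, rfl⟩ := (Projectivization.mk_eq_mk_iff K u w hu hw).1 huw
    exact ⟨t, hus⟩
  · rintro ⟨t, ht⟩
    refine ⟨⟨t • w, (smul_ne_zero_iff_ne t).2 hw⟩, ht, ?_⟩
    exact (Projectivization.mk_eq_mk_iff K _ _ _ hw).2 ⟨t, rfl⟩

theorem projImage_mono {s t : Set V} (h : s ⊆ t) : projImage (K := K) s ⊆ projImage t :=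
  Set.image_mono (Set.preimage_mono h)

theorem exists_ker_eq_of_finrank_add_one_eq [FiniteDimensional K V] {W : Submodule K V}
    (hW : finrank K W + 1 = finrank K V) : ∃ g : Dual K V, g.ker = W := by
  have hquot : finrank K (V ⧸ W) = 1 := by
    have := W.finrank_quotient_add_finrank
    lia
  obtain ⟨e⟩ := nonempty_linearEquiv_of_finrank_eq_one hquot
  exact ⟨e.symm.toLinearMap ∘ₗ W.mkQ, by rw [LinearEquiv.ker_comp, Submodule.ker_mkQ]⟩

variable [LinearOrder K] [IsStrictOrderedRing K]

theorem mk_mem_projImage_cone {C : ConvexCone K V} {w : V} (hw : w ≠ 0) :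
    Projectivization.mk K w hw ∈ projImage (C : Set V) ↔ w ∈ C ∨ -w ∈ C := by
  rw [mk_mem_projImage]
  constructor
  · rintro ⟨t, ht⟩
    rcases t.ne_zero.lt_or_gt with hneg | hpos
    · right
      have hinv : (-(t : K))⁻¹ • t • w = -w := by
        rw [Units.smul_def, inv_neg, neg_smul, inv_smul_smul₀ t.ne_zero]
      exact hinv ▸ C.smul_mem (inv_pos.2 (neg_pos.2 hneg)) ht
    · left
      have hinv : (t : K)⁻¹ • t • w = w := by rw [Units.smul_def, inv_smul_smul₀ t.ne_zero]
      exact hinv ▸ C.smul_mem (inv_pos.2 hpos) ht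
  · rintro (h | h)
    · exact ⟨1, by simpa⟩
    · exact ⟨-1, by simpa⟩

variable {ι : Type*}

/-- The cell of the projective arrangement of hyperplanes `f j = 0` that contains the point
spanned by `v`. -/
def cell (f : ι → Dual K V) (v : V) : Set (ℙ K V) :=
  projImage (openCone f v : Set V)

theorem cell_neg (f : ι → Dual K V) (v : V) : cell f (-v) = cell f v := by
  ext x
  induction x with | h w hw => ?_
  simp only [cell, mk_mem_projImage_cone, mem_openCone_neg, neg_neg, or_comm]

theorem cell_eq_of_mem {f : ι → Dual K V} {v v' : V} (h : v' ∈ openCone f v) :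
    cell f v' = cell f v := by
  rw [cell, cell, openCone_eq_of_mem h]

theorem finite_range_cell [Finite ι] (f : ι → Dual K V) : (Set.range (cell f)).Finite :=
  ((finite_range_openCone f).image fun C : ConvexCone K V ↦ projImage (C : Set V)).subset
    (Set.range_subset_iff.2 fun v ↦ ⟨openCone f v, Set.mem_range_self v, rfl⟩)

end Projectivization

section ConeTopology

variable {V ι : Type*} [AddCommGroup V] [Module ℝ V] [TopologicalSpace V] [ContinuousSMul ℝ V]
  {f : ι → Dual ℝ V} {v : V}

theorem closedCone_subset_closure_openCone [ContinuousAdd V] (hv : ∀ i, f i v ≠ 0) :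
    (closedCone f v : Set V) ⊆ closure (openCone f v : Set V) := by
  intro w hw
  have hlim : Filter.Tendsto (fun t : ℝ ↦ w + t • v) (nhdsWithin 0 (Set.Ioi 0)) (nhds w) := by
    have hcont : Continuous fun t : ℝ ↦ w + t • v := by fun_prop
    simpa using (hcont.tendsto 0).mono_left nhdsWithin_le_nhds
  refine mem_closure_of_tendsto hlim ?_
  filter_upwards [self_mem_nhdsWithin] with t ht
  exact add_mem_openCone hw ((openCone f v).smul_mem ht (self_mem_openCone hv))

variable [IsTopologicalAddGroup V] [T2Space V] [FiniteDimensional ℝ V]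

theorem isOpen_openCone [Finite ι] : IsOpen (openCone f v : Set V) := by
  have hset : (openCone f v : Set V) = ⋂ j, {w | 0 < f j v * f j w} := by
    ext w; simp only [Set.mem_iInter, SetLike.mem_coe, mem_openCone, Set.mem_ofPred_eq]
  rw [hset]
  exact isOpen_iInter_of_finite fun j ↦ isOpen_lt continuous_const
    ((f j).continuous_of_finiteDimensional.const_mul _)

theorem isClosed_closedCone : IsClosed (closedCone f v : Set V) := by
  have hset : (closedCone f v : Set V) = ⋂ j, {w | 0 ≤ f j v * f j w} := by
    ext w; simp only [Set.mem_iInter, SetLike.mem_coe, mem_closedCone, Set.mem_ofPred_eq]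
  rw [hset]
  exact isClosed_iInter fun j ↦ isClosed_le continuous_const
    ((f j).continuous_of_finiteDimensional.const_mul _)

end ConeTopology

section Topology

theorem isQuotientMap_mk' :
    Topology.IsQuotientMap (Projectivization.mk' ℝ : {w : Fin 3 → ℝ // w ≠ 0} → _) :=
  isQuotientMap_quot_mk

theorem isOpen_projImage {s : Set (Fin 3 → ℝ)} (hs : IsOpen s) : IsOpen (projImage (K := ℝ) s) := by
  rw [← isQuotientMap_mk'.isOpen_preimage]
  have hpre : Projectivization.mk' ℝ ⁻¹' projImage s =
      ⋃ t : ℝˣ, {w : {w : Fin 3 → ℝ // w ≠ 0} | t • (w : Fin 3 → ℝ) ∈ s} := by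
    ext w
    simp only [Set.mem_preimage, Projectivization.mk'_eq_mk, mk_mem_projImage, Set.mem_iUnion,
      Set.mem_ofPred_eq]
  rw [hpre]
  exact isOpen_iUnion fun t ↦ hs.preimage (continuous_subtype_val.const_smul t)

theorem isClosed_projImage {C : ConvexCone ℝ (Fin 3 → ℝ)}
    (hC : IsClosed (C : Set (Fin 3 → ℝ))) :
    IsClosed (projImage (K := ℝ) (C : Set (Fin 3 → ℝ))) := by
  rw [← isQuotientMap_mk'.isClosed_preimage]
  have hpre : Projectivization.mk' ℝ ⁻¹' projImage (C : Set (Fin 3 → ℝ)) =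
      {w : {w : Fin 3 → ℝ // w ≠ 0} | (w : Fin 3 → ℝ) ∈ C} ∪ {w | -(w : Fin 3 → ℝ) ∈ C} := by
    ext w
    simp only [Set.mem_preimage, Projectivization.mk'_eq_mk, mk_mem_projImage_cone,
      Set.mem_union, Set.mem_ofPred_eq]
  rw [hpre]
  exact (hC.preimage continuous_subtype_val).union (hC.preimage continuous_subtype_val.neg)

theorem projImage_closure_subset (s : Set (Fin 3 → ℝ)) :
    projImage (K := ℝ) (closure s) ⊆ closure (projImage s) := by
  have hopen : IsOpenMap (Subtype.val : {w : Fin 3 → ℝ // w ≠ 0} → _) :=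
    isOpen_ne.isOpenMap_subtype_val
  exact (Set.image_mono hopen.preimage_closure_subset_closure_preimage).trans
    (image_closure_subset_closure_image isQuotientMap_mk'.continuous)

theorem isPreconnected_projImage {C : ConvexCone ℝ (Fin 3 → ℝ)} (h0 : 0 ∉ C) :
    IsPreconnected (projImage (K := ℝ) (C : Set (Fin 3 → ℝ))) := by
  have hpre : IsPreconnected (Subtype.val ⁻¹' (C : Set (Fin 3 → ℝ)) :
      Set {w : Fin 3 → ℝ // w ≠ 0}) := by
    have hind := (Topology.IsEmbedding.subtypeVal (p := fun w : Fin 3 → ℝ ↦ w ≠ 0)).isInducing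
    refine hind.isPreconnected_image.1 ?_
    rw [Set.image_preimage_eq_of_subset fun w hw ↦ ⟨⟨w, ne_of_mem_of_not_mem hw h0⟩, rfl⟩]
    exact C.convex.isPreconnected
  exact hpre.image _ isQuotientMap_mk'.continuous.continuousOn

theorem closure_cell {ι : Type*} {f : ι → Dual ℝ (Fin 3 → ℝ)} {v : Fin 3 → ℝ}
    (hv : ∀ i, f i v ≠ 0) :
    closure (cell f v) = projImage (closedCone f v : Set (Fin 3 → ℝ)) :=
  (closure_minimal (projImage_mono openCone_le_closedCone)
    (isClosed_projImage isClosed_closedCone)).antisymm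
    ((projImage_mono (closedCone_subset_closure_openCone hv)).trans (projImage_closure_subset _))

end Topology

section Cells

variable {ι : Type*} {f : ι → Dual ℝ (Fin 3 → ℝ)} {v : Fin 3 → ℝ} {i : ι}

theorem mk_mem_projLine_ker {g : Dual ℝ (Fin 3 → ℝ)} {w : Fin 3 → ℝ} (hw : w ≠ 0) :
    Projectivization.mk ℝ w hw ∈ projLine g.ker ↔ g w = 0 := by
  rw [projLine, Set.mem_ofPred_eq, Projectivization.submodule_mk,
    Submodule.span_singleton_le_iff_mem, LinearMap.mem_ker]

theorem mk_mem_compl_iUnion_projLine {w : Fin 3 → ℝ} (hw : w ≠ 0) :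
    Projectivization.mk ℝ w hw ∈ (⋃ i, projLine (f i).ker)ᶜ ↔ ∀ i, f i w ≠ 0 := by
  simp only [Set.mem_compl_iff, Set.mem_iUnion, mk_mem_projLine_ker, not_exists, ne_eq]

theorem inGeneralPosition_of_forall_mem_projLine
    (hf : ∀ (x : ℙ ℝ (Fin 3 → ℝ)) (i j l : ι), i ≠ j → i ≠ l → j ≠ l → x ∈ projLine (f i).ker →
      x ∈ projLine (f j).ker → x ∈ projLine (f l).ker → False) : InGeneralPosition f := by
  intro i j l hij hil hjl v hi hj hl
  by_contra hv
  exact hf (Projectivization.mk ℝ v hv) i j l hij hil hjl ((mk_mem_projLine_ker hv).2 hi)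
    ((mk_mem_projLine_ker hv).2 hj) ((mk_mem_projLine_ker hv).2 hl)

theorem closure_cell_inter_projLine_nonempty_iff (hv : ∀ i, f i v ≠ 0) :
    (closure (cell f v) ∩ projLine (f i).ker).Nonempty ↔ i ∈ walls f v := by
  rw [closure_cell hv]
  constructor
  · rintro ⟨_, ⟨⟨w, hw⟩, hwv, rfl⟩, hwi⟩
    exact ⟨w, hwv, hw, (mk_mem_projLine_ker hw).1 hwi⟩
  · rintro ⟨w, hwv, hw, hwi⟩
    exact ⟨_, ⟨⟨w, hw⟩, hwv, rfl⟩, (mk_mem_projLine_ker hw).2 hwi⟩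

theorem cell_subset_compl_iUnion_projLine : cell f v ⊆ (⋃ i, projLine (f i).ker)ᶜ := by
  rintro _ ⟨⟨w, hw⟩, hwv, rfl⟩
  exact (mk_mem_compl_iUnion_projLine hw).2 (ne_zero_of_mem_openCone hwv)

theorem closure_cell_inter_compl_subset (hv : ∀ i, f i v ≠ 0) :
    closure (cell f v) ∩ (⋃ i, projLine (f i).ker)ᶜ ⊆ cell f v := by
  rw [closure_cell hv]
  rintro _ ⟨⟨⟨w, hw⟩, hwv, rfl⟩, hwf⟩
  have hwf' := (mk_mem_compl_iUnion_projLine hw).1 hwf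
  exact ⟨⟨w, hw⟩, fun j ↦ (hwv j).lt_of_ne' (mul_ne_zero (hv j) (hwf' j)), rfl⟩

theorem connectedComponentIn_eq_cell [Finite ι] [Nonempty ι] (hv0 : v ≠ 0)
    (hv : ∀ i, f i v ≠ 0) :
    connectedComponentIn (⋃ i, projLine (f i).ker)ᶜ (Projectivization.mk ℝ v hv0) = cell f v := by
  have hmem : Projectivization.mk ℝ v hv0 ∈ cell f v := ⟨⟨v, hv0⟩, self_mem_openCone hv, rfl⟩
  have hcompl := (mk_mem_compl_iUnion_projLine hv0).2 hv
  refine Set.Subset.antisymm ?_ ?_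
  · refine isPreconnected_connectedComponentIn.subset_of_closure_inter_subset
      (isOpen_projImage isOpen_openCone) ⟨_, mem_connectedComponentIn hcompl, hmem⟩ ?_
    exact (Set.inter_subset_inter_right _ (connectedComponentIn_subset _ _)).trans
      (closure_cell_inter_compl_subset hv)
  · exact (isPreconnected_projImage zero_notMem_openCone).subset_connectedComponentIn hmem
      cell_subset_compl_iUnion_projLine

end Cells

section Arrangement

variable {n : ℕ} {f : Fin n → Dual ℝ (Fin 3 → ℝ)} {C : Set (ℙ ℝ (Fin 3 → ℝ))}

theorem exists_eq_cell_of_isArrCell [NeZero n] (hC : IsArrCell (fun i ↦ (f i).ker) C) :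
    ∃ v, (∀ i, f i v ≠ 0) ∧ C = cell f v := by
  obtain ⟨x, hx, rfl⟩ := hC
  induction x with | h v hv0 => ?_
  have hv := (mk_mem_compl_iUnion_projLine hv0).1 hx
  exact ⟨v, hv, connectedComponentIn_eq_cell hv0 hv⟩

/-- The indices of the lines of the arrangement incident to `C`. -/
def incidentLines (W : Fin n → Submodule ℝ (Fin 3 → ℝ)) (C : Set (ℙ ℝ (Fin 3 → ℝ))) :
    Set (Fin n) :=
  {i | (closure C ∩ projLine (W i)).Nonempty}

theorem incidentLines_cell {v : Fin 3 → ℝ} (hv : ∀ i, f i v ≠ 0) :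
    incidentLines (fun i ↦ (f i).ker) (cell f v) = walls f v :=
  Set.ext fun _ ↦ closure_cell_inter_projLine_nonempty_iff hv

theorem exists_isTriangular_of_isArrTriangle [NeZero n] (hC : IsArrTriangle (fun i ↦ (f i).ker) C) :
    ∃ v, IsTriangular f v ∧ C = cell f v := by
  obtain ⟨v, hv, rfl⟩ := exists_eq_cell_of_isArrCell hC.1
  exact ⟨v, ⟨hv, by rw [← incidentLines_cell hv]; exact hC.2⟩, rfl⟩

theorem finite_isArrTriangle [NeZero n] (f : Fin n → Dual ℝ (Fin 3 → ℝ)) :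
    Finite {C // IsArrTriangle (fun i ↦ (f i).ker) C} := by
  refine (finite_range_cell f).subset fun C hC ↦ ?_
  obtain ⟨v, -, rfl⟩ := exists_isTriangular_of_isArrTriangle hC
  exact Set.mem_range_self v

theorem exists_isTriangleAt_of_isArrTriangle [NeZero n] (hf : InGeneralPosition f) {b c : Fin n}
    (hbc : b ≠ c) {p : Fin 3 → ℝ} (hp : p ≠ 0) (hpb : f b p = 0) (hpc : f c p = 0)
    (hC : IsArrTriangle (fun i ↦ (f i).ker) C) (hb : b ∈ incidentLines (fun i ↦ (f i).ker) C)
    (hc : c ∈ incidentLines (fun i ↦ (f i).ker) C) :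
    ∃ v, IsTriangleAt f b c p v ∧ C = cell f v := by
  obtain ⟨v, hv, rfl⟩ := exists_isTriangular_of_isArrTriangle hC
  rw [incidentLines_cell hv.apply_ne_zero] at hb hc
  rcases hv.isTriangleAt_or_neg hf hb hc hbc hp hpb hpc with h | h
  · exact ⟨v, h, rfl⟩
  · exact ⟨-v, h, (cell_neg f v).symm⟩

/-- Two triangles with a common vertex lie on opposite sides of either line through it, so there
is no room for a third one. -/
theorem ncard_isArrTriangle_incident_pair_le_two (hn : 3 < n) (hf : InGeneralPosition f)
    {b c : Fin n} (hbc : b ≠ c) :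
    {C : {C // IsArrTriangle (fun i ↦ (f i).ker) C} |
      b ∈ incidentLines (fun i ↦ (f i).ker) C.1 ∧
      c ∈ incidentLines (fun i ↦ (f i).ker) C.1}.ncard ≤ 2 := by
  have : NeZero n := ⟨by lia⟩
  have := finite_isArrTriangle f
  have hV : 2 < finrank ℝ (Fin 3 → ℝ) := by simp
  obtain ⟨p, hp, hpb, hpc⟩ := exists_ne_zero_apply_eq_zero hV (f b) (f c)
  by_contra! hthree
  obtain ⟨C₁, C₂, C₃, h₁, h₂, h₃, h₁₂, h₁₃, h₂₃⟩ := (Set.two_lt_ncard_iff).1 hthree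
  obtain ⟨v₁, hv₁, hC₁⟩ :=
    exists_isTriangleAt_of_isArrTriangle hf hbc hp hpb hpc C₁.2 h₁.1 h₁.2
  obtain ⟨v₂, hv₂, hC₂⟩ :=
    exists_isTriangleAt_of_isArrTriangle hf hbc hp hpb hpc C₂.2 h₂.1 h₂.2
  obtain ⟨v₃, hv₃, hC₃⟩ :=
    exists_isTriangleAt_of_isArrTriangle hf hbc hp hpb hpc C₃.2 h₃.1 h₃.2
  have opposite {C C' : {C // IsArrTriangle (fun i ↦ (f i).ker) C}} {v v' : Fin 3 → ℝ}
      (hne : C ≠ C') (hv : IsTriangleAt f b c p v) (hv' : IsTriangleAt f b c p v')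
      (hC : C.1 = cell f v) (hC' : C'.1 = cell f v') : f b v * f b v' < 0 :=
    hv.mul_neg_of_notMem_openCone (by simpa) hV hf hbc hv' fun hmem ↦
      hne (Subtype.ext (by rw [hC, hC', cell_eq_of_mem hmem]))
  have h₁₂' := opposite h₁₂ hv₁ hv₂ hC₁ hC₂
  have h₁₃' := opposite h₁₃ hv₁ hv₃ hC₁ hC₃
  have h₂₃' := opposite h₂₃ hv₂ hv₃ hC₂ hC₃
  exact h₂₃'.not_gt (mul_pos_trans (y := -f b v₁) (by linarith) (by linarith))

theorem three_mul_card_isArrTriangle_le (hn : 3 < n) (hf : InGeneralPosition f) :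
    3 * Nat.card {C // IsArrTriangle (fun i ↦ (f i).ker) C} ≤ n * (n - 1) := by
  have : NeZero n := ⟨by lia⟩
  have := finite_isArrTriangle f
  have hcount := card_mul_le_of_ncard_pair_le
    (fun C : {C // IsArrTriangle (fun i ↦ (f i).ker) C} ↦ incidentLines (fun i ↦ (f i).ker) C.1)
    (fun C ↦ C.2.2.ge) fun b c ↦ ncard_isArrTriangle_incident_pair_le_two hn hf
  rw [Nat.card_fin] at hcount
  lia

theorem exists_card_isArrTriangle_incident_lt (hn : 3 < n) (hf : InGeneralPosition f) :
    ∃ i, Nat.card {C // IsArrTriangle (fun i ↦ (f i).ker) C ∧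
      i ∈ incidentLines (fun i ↦ (f i).ker) C} < n := by
  have : NeZero n := ⟨by lia⟩
  have := finite_isArrTriangle f
  have hlt : Nat.card {C // IsArrTriangle (fun i ↦ (f i).ker) C} * 3 < Nat.card (Fin n) * n := by
    rw [Nat.card_fin, mul_comm]
    exact (three_mul_card_isArrTriangle_le hn hf).trans_lt
      (Nat.mul_lt_mul_of_pos_left (by lia) (by lia))
  obtain ⟨i, hi⟩ := exists_ncard_mem_lt
    (fun C : {C // IsArrTriangle (fun i ↦ (f i).ker) C} ↦ incidentLines (fun i ↦ (f i).ker) C.1)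
    (fun C ↦ C.2.2.le) hlt
  have hcongr := Nat.card_congr (Equiv.subtypeSubtypeEquivSubtypeInter
    (IsArrTriangle fun i ↦ (f i).ker) fun C ↦ i ∈ incidentLines (fun i ↦ (f i).ker) C)
  exact ⟨i, hcongr.symm.trans_lt hi⟩

theorem exists_eq_ker_of_finrank_eq_two {W : Fin n → Submodule ℝ (Fin 3 → ℝ)}
    (hrank : ∀ i, finrank ℝ (W i) = 2) :
    ∃ f : Fin n → Dual ℝ (Fin 3 → ℝ), W = fun i ↦ (f i).ker := by
  choose f hf using fun i ↦ exists_ker_eq_of_finrank_add_one_eq (W := W i) (by simp [hrank i])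
  exact ⟨f, funext fun i ↦ (hf i).symm⟩

end Arrangement

end LineArrangement

open LineArrangement

/-- **Grünbaum's observation.** A simple arrangement of `n ≥ 4` lines in the real
projective plane (no point lying on three of the lines) has at most `n(n-1)/3`
triangles; consequently, some line of the arrangement is incident to at most `n-1`
triangles. -/
theorem grunbaum_triangle_bound (n : ℕ) (hn : 4 ≤ n)
    (W : Fin n → Submodule ℝ (Fin 3 → ℝ))
    (hrank : ∀ i, Module.finrank ℝ (W i) = 2)
    (hdist : Function.Injective W)
    (hsimple : ∀ (x : Projectivization ℝ (Fin 3 → ℝ)) (i j l : Fin n),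
      i ≠ j → i ≠ l → j ≠ l →
      x ∈ projLine (W i) → x ∈ projLine (W j) → x ∈ projLine (W l) → False) :
    (Nat.card {C : Set (Projectivization ℝ (Fin 3 → ℝ)) // IsArrTriangle W C} : ℝ)
        ≤ (n : ℝ) * ((n : ℝ) - 1) / 3 ∧
      ∃ i : Fin n,
        Nat.card {C : Set (Projectivization ℝ (Fin 3 → ℝ)) //
          IsArrTriangle W C ∧ (closure C ∩ projLine (W i)).Nonempty} ≤ n - 1 := by
  obtain ⟨f, rfl⟩ := exists_eq_ker_of_finrank_eq_two hrank
  have hf : InGeneralPosition f := inGeneralPosition_of_forall_mem_projLine hsimple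
  constructor
  · have hcard : (3 * Nat.card {C // IsArrTriangle (fun i ↦ (f i).ker) C} : ℝ) ≤ n * (n - 1) := by
      rw [← Nat.cast_pred (by lia : 0 < n)]
      exact_mod_cast three_mul_card_isArrTriangle_le hn hf
    rwa [le_div_iff₀' three_pos]
  · obtain ⟨i, hi⟩ := exists_card_isArrTriangle_incident_lt hn hf
    exact ⟨i, Nat.le_sub_one_of_lt hi⟩
end
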